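/- Ergodic properties of the (N+1)-dimensional problem. Assume (H1)–(H4). Let η ≥ 0, a₀ ∈ ℝ, L ∈ ℝ, p ∈ ℝ^N and P = (p,1) ∈ ℝ^{N+1}. Let U_η ∈ C_b(ℝ⁺×ℝ^{N+1}) be the viscosity solution of ∂_τ U = L + I_s[U(τ,·,y_{N+1})] − W'(U + P·Y) + σ(τ,y) + η[a₀ + inf_{Y'} U(τ,Y') − U(τ,Y)]·|∂_{y_{N+1}}U + 1| on ℝ⁺×ℝ^{N+1} with U(0,Y)=0, where Y=(y,y_{N+1}) and I_s acts on the y-variable only. Then there exists a unique λ_η = λ_η(p,L) ∈ ℝ such that |U_η(τ,Y) − λ_η τ| ≤ C for all τ > 0 and Y ∈ ℝ^{N+1}, with C independent of η. Moreover L − ‖W'‖_∞ − ‖σ‖_∞ + ηa₀ ≤ λ_η ≤ L + ‖W'‖_∞ + ‖σ‖_∞ + ηa₀. -/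

import Mathlib

/-!
The proof compares the solution `U` with its own translates. The equation is invariant under integer
time shifts, under lattice translations in `y` corrected by a shift of `y_{N+1}`, under integer
shifts of `y_{N+1}`, and under `U ↦ U(·, · + h) + h` in the variable `y_{N+1}`
(`GenSol.translate`). With the comparison principle (`GenSol.comparison`) this makes `U` periodic
up to a shear and `y_{N+1} ↦ U + y_{N+1}` nondecreasing, so that the oscillation of `U` in `y_{N+1}`
is at most one.

The comparison principle is proved by doubling the variables. Since nothing is known about the
behaviour of solutions at infinity, suprema are turned into maxima by adding a small smooth bump
(`exists_max_bump`), which, unlike a growing penalisation, costs only `O(δ)` in every term of the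
equation. The same device yields the linear barriers `GenSol.upper` and `GenSol.lower`, which bound
the growth of `U` by `L ± (‖W'‖_∞ + ‖σ‖_∞) + η a₀`.

The key estimate is `GenSol.osc`: the oscillation of `U(t, ·)` over all of `ℝ^{N+1}` is bounded by a
constant `Q` depending on `N`, `s`, `g`, `‖W'‖_∞` and `‖σ‖_∞` only. At points where
`U(t, ·)` is maximal and minimal the terms in `η` can be discarded, and a large oscillation would
make the difference of the two nonlocal terms very negative, because the kernel is bounded below on
compact sets away from the origin.

Shifting time by an integer and subtracting an integer then shows that `k ↦ U(k, 0)` is additive up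
to `Q + 1`, and Fekete's lemma gives the slope (`exists_slope`, `GenSol.ergodic`). The barriers
bound the slope and control non-integer times.
-/

open MeasureTheory Filter Metric Set RealInnerProductSpace

noncomputable section

/-- `ℝ^N` as a Euclidean space. -/
abbrev EN (N : ℕ) := EuclideanSpace ℝ (Fin N)

/-- The singular kernel `g(z/|z|) |z|^{-N-2s}` of the anisotropic Lévy operator. -/
noncomputable def levyKernel (N : ℕ) (s : ℝ) (g : EN N → ℝ) (z : EN N) : ℝ :=
  g (‖z‖⁻¹ • z) * ‖z‖ ^ (-(N : ℝ) - 2 * s)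

/-- `I^{1,r}[φ, x]`: integral over `|z| ≤ r` of the second order increment of `φ`. -/
noncomputable def levyI1 (N : ℕ) (s : ℝ) (g : EN N → ℝ) (φ : EN N → ℝ) (r : ℝ) (x : EN N) : ℝ :=
  ∫ z in {z : EN N | ‖z‖ ≤ r}, (φ (x + z) - φ x - fderiv ℝ φ x z) * levyKernel N s g z

/-- `I^{2,r}[u, x]`: integral over `|z| > r` of the increment of `u`. -/
noncomputable def levyI2 (N : ℕ) (s : ℝ) (g : EN N → ℝ) (u : EN N → ℝ) (r : ℝ) (x : EN N) : ℝ :=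
  ∫ z in {z : EN N | r < ‖z‖}, (u (x + z) - u x) * levyKernel N s g z

/-- The anisotropic Lévy operator `I_s` of order `2s`, defined as a principal value. -/
noncomputable def levyOp (N : ℕ) (s : ℝ) (g : EN N → ℝ) (φ : EN N → ℝ) (x : EN N) : ℝ :=
  limUnder (nhdsWithin 0 (Ioi (0:ℝ)))
    (fun ρ => ∫ y in {y : EN N | ρ < ‖y‖}, (φ (x + y) - φ x) * levyKernel N s g y)

/-- (H1): `g` is continuous, positive on the sphere and even. -/
def H1 (N : ℕ) (g : EN N → ℝ) : Prop :=
  Continuous g ∧ (∀ z : EN N, ‖z‖ = 1 → 0 < g z) ∧ (∀ z : EN N, g (-z) = g z)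

/-- (H2): `W ∈ C^{1,1}(ℝ)` and `W(v+1) = W(v)`. -/
def H2 (W : ℝ → ℝ) : Prop :=
  ContDiff ℝ 1 W ∧ (∃ K : NNReal, LipschitzWith K (deriv W)) ∧ ∀ v, W (v + 1) = W v

/-- (H3): `σ ∈ C^{0,1}(ℝ⁺ × ℝ^N)`, 1-periodic in `t` and ℤ^N-periodic in `x`. -/
def H3 (N : ℕ) (σ : ℝ → EN N → ℝ) : Prop :=
  (∃ K : NNReal, LipschitzWith K (fun q : ℝ × EN N => σ q.1 q.2)) ∧
  (∀ t x, σ (t + 1) x = σ t x) ∧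
  (∀ (k : Fin N → ℤ) (t : ℝ) (x : EN N), σ t (x + (WithLp.equiv 2 (Fin N → ℝ)).symm (fun j => (k j : ℝ))) = σ t x)

/-- (H4): `u₀ ∈ W^{2,∞}(ℝ^N)`. -/
def H4 (N : ℕ) (u₀ : EN N → ℝ) : Prop :=
  ContDiff ℝ 2 u₀ ∧
  ∃ M, ∀ x, |u₀ x| ≤ M ∧ ‖fderiv ℝ u₀ x‖ ≤ M ∧ ‖fderiv ℝ (fderiv ℝ u₀) x‖ ≤ M

/-- Boundedness on `(0,T) × ℝ^N` for every `T > 0`. -/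
def LocBddPos (N : ℕ) (u : ℝ → EN N → ℝ) : Prop :=
  ∀ T > 0, ∃ M, ∀ t ∈ Ioc (0:ℝ) T, ∀ x, |u t x| ≤ M

/-- Viscosity subsolution of `∂_t u = F(t, x, u, ∇_x u, I_s[u(t,·)])` with initial datum `u₀`. -/
def IsSubsol (N : ℕ) (s : ℝ) (g : EN N → ℝ)
    (F : ℝ → EN N → ℝ → (EN N →L[ℝ] ℝ) → ℝ → ℝ)
    (u₀ : EN N → ℝ) (u : ℝ → EN N → ℝ) : Prop :=
  UpperSemicontinuousOn (fun q : ℝ × EN N => u q.1 q.2) (Ici 0 ×ˢ univ) ∧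
  LocBddPos N u ∧
  (∀ x, u 0 x ≤ u₀ x) ∧
  ∀ (t₀ : ℝ) (x₀ : EN N), 0 < t₀ →
    ∀ (φ : ℝ → EN N → ℝ), ContDiff ℝ 2 (fun q : ℝ × EN N => φ q.1 q.2) →
    ∀ τ r : ℝ, 0 < τ → τ < t₀ → 0 < r →
    (∀ t x, t ∈ Ioo (t₀ - τ) (t₀ + τ) → x ∈ ball x₀ r →
      u t x - φ t x ≤ u t₀ x₀ - φ t₀ x₀) →
    deriv (fun t => φ t x₀) t₀ -
      F t₀ x₀ (u t₀ x₀) (fderiv ℝ (fun x => φ t₀ x) x₀)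
        (levyI1 N s g (fun x => φ t₀ x) r x₀ + levyI2 N s g (fun x => u t₀ x) r x₀) ≤ 0

/-- Viscosity supersolution of `∂_t u = F(t, x, u, ∇_x u, I_s[u(t,·)])` with initial datum `u₀`. -/
def IsSupersol (N : ℕ) (s : ℝ) (g : EN N → ℝ)
    (F : ℝ → EN N → ℝ → (EN N →L[ℝ] ℝ) → ℝ → ℝ)
    (u₀ : EN N → ℝ) (u : ℝ → EN N → ℝ) : Prop :=
  LowerSemicontinuousOn (fun q : ℝ × EN N => u q.1 q.2) (Ici 0 ×ˢ univ) ∧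
  LocBddPos N u ∧
  (∀ x, u₀ x ≤ u 0 x) ∧
  ∀ (t₀ : ℝ) (x₀ : EN N), 0 < t₀ →
    ∀ (φ : ℝ → EN N → ℝ), ContDiff ℝ 2 (fun q : ℝ × EN N => φ q.1 q.2) →
    ∀ τ r : ℝ, 0 < τ → τ < t₀ → 0 < r →
    (∀ t x, t ∈ Ioo (t₀ - τ) (t₀ + τ) → x ∈ ball x₀ r →
      u t₀ x₀ - φ t₀ x₀ ≤ u t x - φ t x) →
    0 ≤ deriv (fun t => φ t x₀) t₀ -
      F t₀ x₀ (u t₀ x₀) (fderiv ℝ (fun x => φ t₀ x) x₀)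
        (levyI1 N s g (fun x => φ t₀ x) r x₀ + levyI2 N s g (fun x => u t₀ x) r x₀)

/-- Viscosity solution in `C_b(ℝ⁺ × ℝ^N)`. -/
def IsSol (N : ℕ) (s : ℝ) (g : EN N → ℝ)
    (F : ℝ → EN N → ℝ → (EN N →L[ℝ] ℝ) → ℝ → ℝ)
    (u₀ : EN N → ℝ) (u : ℝ → EN N → ℝ) : Prop :=
  ContinuousOn (fun q : ℝ × EN N => u q.1 q.2) (Ici 0 ×ˢ univ) ∧
  IsSubsol N s g F u₀ u ∧ IsSupersol N s g F u₀ u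

/-- The right-hand side of the cell problem
`∂_τ w = I_s[w(τ,·)] + L − W'(w + p·y) + σ(τ,y)`. -/
def cellF (N : ℕ) (W : ℝ → ℝ) (σ : ℝ → EN N → ℝ) (p : EN N) (L : ℝ) :
    ℝ → EN N → ℝ → (EN N →L[ℝ] ℝ) → ℝ → ℝ :=
  fun τ y v _ I => I + L - deriv W (v + ⟪p, y⟫) + σ τ y

/-- `w(τ,y)/τ → lam` as `τ → +∞`, locally uniformly in `y`. -/
def SlopeLim (N : ℕ) (w : ℝ → EN N → ℝ) (lam : ℝ) : Prop :=
  ∀ ε > 0, ∀ R > 0, ∃ T : ℝ, ∀ τ, T ≤ τ → ∀ y : EN N, ‖y‖ ≤ R → |w τ y / τ - lam| ≤ ε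

end

noncomputable section

/-- Viscosity subsolution of the `(N+1)`-dimensional problem
`∂_t U = F(t, y, y_{N+1}, U, ∇_y φ, ∂_{y_{N+1}} φ, I_s-term, inf_{Y'} U(t,Y'))`,
where `I_s` acts on the `y`-variable only, with initial datum `U₀`. -/
def IsSubsolNp1 (N : ℕ) (s : ℝ) (g : EN N → ℝ)
    (F : ℝ → EN N → ℝ → ℝ → (EN N →L[ℝ] ℝ) → ℝ → ℝ → ℝ → ℝ)
    (U₀ : EN N → ℝ → ℝ) (U : ℝ → EN N → ℝ → ℝ) : Prop :=
  UpperSemicontinuousOn (fun q : ℝ × EN N × ℝ => U q.1 q.2.1 q.2.2) (Ici 0 ×ˢ univ) ∧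
  (∀ T > 0, ∃ M, ∀ t ∈ Ioc (0:ℝ) T, ∀ (y : EN N) (yn : ℝ), |U t y yn| ≤ M) ∧
  (∀ y yn, U 0 y yn ≤ U₀ y yn) ∧
  ∀ (t₀ : ℝ) (y₀ : EN N) (yn₀ : ℝ), 0 < t₀ →
    ∀ (φ : ℝ → EN N → ℝ → ℝ),
      ContDiff ℝ 2 (fun q : ℝ × EN N × ℝ => φ q.1 q.2.1 q.2.2) →
    ∀ τ r : ℝ, 0 < τ → τ < t₀ → 0 < r →
    (∀ t y yn, t ∈ Ioo (t₀ - τ) (t₀ + τ) → ‖y - y₀‖ < r → |yn - yn₀| < r →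
      U t y yn - φ t y yn ≤ U t₀ y₀ yn₀ - φ t₀ y₀ yn₀) →
    deriv (fun t => φ t y₀ yn₀) t₀ -
      F t₀ y₀ yn₀ (U t₀ y₀ yn₀)
        (fderiv ℝ (fun y => φ t₀ y yn₀) y₀)
        (deriv (fun yn => φ t₀ y₀ yn) yn₀)
        (levyI1 N s g (fun y => φ t₀ y yn₀) r y₀ + levyI2 N s g (fun y => U t₀ y yn₀) r y₀)
        (⨅ q : EN N × ℝ, U t₀ q.1 q.2) ≤ 0

/-- Viscosity supersolution of the `(N+1)`-dimensional problem. -/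
def IsSupersolNp1 (N : ℕ) (s : ℝ) (g : EN N → ℝ)
    (F : ℝ → EN N → ℝ → ℝ → (EN N →L[ℝ] ℝ) → ℝ → ℝ → ℝ → ℝ)
    (U₀ : EN N → ℝ → ℝ) (U : ℝ → EN N → ℝ → ℝ) : Prop :=
  LowerSemicontinuousOn (fun q : ℝ × EN N × ℝ => U q.1 q.2.1 q.2.2) (Ici 0 ×ˢ univ) ∧
  (∀ T > 0, ∃ M, ∀ t ∈ Ioc (0:ℝ) T, ∀ (y : EN N) (yn : ℝ), |U t y yn| ≤ M) ∧
  (∀ y yn, U₀ y yn ≤ U 0 y yn) ∧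
  ∀ (t₀ : ℝ) (y₀ : EN N) (yn₀ : ℝ), 0 < t₀ →
    ∀ (φ : ℝ → EN N → ℝ → ℝ),
      ContDiff ℝ 2 (fun q : ℝ × EN N × ℝ => φ q.1 q.2.1 q.2.2) →
    ∀ τ r : ℝ, 0 < τ → τ < t₀ → 0 < r →
    (∀ t y yn, t ∈ Ioo (t₀ - τ) (t₀ + τ) → ‖y - y₀‖ < r → |yn - yn₀| < r →
      U t₀ y₀ yn₀ - φ t₀ y₀ yn₀ ≤ U t y yn - φ t y yn) →
    0 ≤ deriv (fun t => φ t y₀ yn₀) t₀ -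
      F t₀ y₀ yn₀ (U t₀ y₀ yn₀)
        (fderiv ℝ (fun y => φ t₀ y yn₀) y₀)
        (deriv (fun yn => φ t₀ y₀ yn) yn₀)
        (levyI1 N s g (fun y => φ t₀ y yn₀) r y₀ + levyI2 N s g (fun y => U t₀ y yn₀) r y₀)
        (⨅ q : EN N × ℝ, U t₀ q.1 q.2)

/-- Viscosity solution (continuous, bounded on finite time intervals) of the
`(N+1)`-dimensional problem. -/
def IsSolNp1 (N : ℕ) (s : ℝ) (g : EN N → ℝ)
    (F : ℝ → EN N → ℝ → ℝ → (EN N →L[ℝ] ℝ) → ℝ → ℝ → ℝ → ℝ)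
    (U₀ : EN N → ℝ → ℝ) (U : ℝ → EN N → ℝ → ℝ) : Prop :=
  ContinuousOn (fun q : ℝ × EN N × ℝ => U q.1 q.2.1 q.2.2) (Ici 0 ×ˢ univ) ∧
  IsSubsolNp1 N s g F U₀ U ∧ IsSupersolNp1 N s g F U₀ U

/-- `‖W'‖_∞`. -/
noncomputable def supW' (W : ℝ → ℝ) : ℝ := ⨆ v : ℝ, |deriv W v|

/-- `‖σ‖_∞` (over `ℝ⁺ × ℝ^N`). -/
noncomputable def supSigma (N : ℕ) (σ : ℝ → EN N → ℝ) : ℝ :=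
  sSup {r : ℝ | ∃ t x, 0 ≤ t ∧ r = |σ t x|}

end

/-! ### The Lévy kernel -/

section Kernel

variable {N : ℕ} {s : ℝ} {g : EN N → ℝ}

lemma levyKernel_nonneg (hN : 1 ≤ N) (hs : s ∈ Ioo (0:ℝ) 1) (hg : H1 N g) (z : EN N) :
    0 ≤ levyKernel N s g z := by
  unfold levyKernel
  rcases eq_or_ne z 0 with rfl | hz
  · have : (-(N : ℝ) - 2 * s) ≠ 0 := by
      have : (1:ℝ) ≤ N := by exact_mod_cast hN
      have := hs.1
      linarith
    rw [norm_zero, Real.zero_rpow this]; simp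
  · have h1 : ‖(‖z‖⁻¹ • z)‖ = 1 := by
      rw [norm_smul, norm_inv, norm_norm, inv_mul_cancel₀ (norm_ne_zero_iff.2 hz)]
    exact mul_nonneg (hg.2.1 _ h1).le (by positivity)

lemma levyKernel_measurable (hg : H1 N g) : Measurable (levyKernel N s g) := by
  unfold levyKernel
  have := hg.1.measurable
  fun_prop

lemma levyKernel_le (hg : H1 N g) :
    ∃ G : ℝ, 0 ≤ G ∧ ∀ z : EN N, levyKernel N s g z ≤ G * ‖z‖ ^ (-(N : ℝ) - 2 * s) := by
  obtain ⟨G, hG⟩ := (isCompact_closedBall (0 : EN N) 1).exists_bound_of_continuousOn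
    hg.1.continuousOn
  refine ⟨max G 0, le_max_right _ _, fun z => ?_⟩
  unfold levyKernel
  have hz : (‖z‖⁻¹ • z) ∈ closedBall (0 : EN N) 1 := by
    rw [mem_closedBall_zero_iff, norm_smul, norm_inv, norm_norm]
    exact inv_mul_le_one
  gcongr
  exact ((le_abs_self _).trans (hG _ hz)).trans (le_max_left _ _)

lemma levyKernel_integrableOn_far (hN : 1 ≤ N) (hs : s ∈ Ioo (0:ℝ) 1) (hg : H1 N g)
    {r : ℝ} (hr : 0 < r) : IntegrableOn (levyKernel N s g) {z : EN N | r < ‖z‖} := by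
  obtain ⟨G, hG0, hG⟩ := levyKernel_le (s := s) hg
  have hfin : (Module.finrank ℝ (EN N) : ℝ) < N + 2 * s := by
    have := hs.1
    simp; linarith
  have hInt := integrable_one_add_norm (E := EN N) (μ := volume) hfin
  have hms : MeasurableSet {z : EN N | r < ‖z‖} := measurableSet_lt measurable_const measurable_norm
  refine Integrable.mono' (g := fun z => G * (r / (1 + r)) ^ (-(N : ℝ) - 2 * s) *
      (1 + ‖z‖) ^ (-((N : ℝ) + 2 * s))) ((hInt.const_mul _).restrict)
    (levyKernel_measurable hg).aestronglyMeasurable ?_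
  refine (ae_restrict_iff' hms).2 (Eventually.of_forall fun z (hz : r < ‖z‖) => ?_)
  rw [Real.norm_of_nonneg (levyKernel_nonneg hN hs hg z), mul_assoc]
  refine (hG z).trans (mul_le_mul_of_nonneg_left ?_ hG0)
  have he : (-((N : ℝ) + 2 * s)) = -(N : ℝ) - 2 * s := by ring
  rw [he, ← Real.mul_rpow (by positivity) (by positivity)]
  refine Real.rpow_le_rpow_of_nonpos (by positivity) ?_ (by
    have := hs.1
    have : (0:ℝ) ≤ N := by positivity
    linarith)
  rw [div_mul_eq_mul_div, div_le_iff₀ (by positivity)]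
  nlinarith

lemma levyKernel_integrableOn_near (hN : 1 ≤ N) (hs : s ∈ Ioo (0:ℝ) 1) (hg : H1 N g) :
    IntegrableOn (fun z => ‖z‖ ^ 2 * levyKernel N s g z) {z : EN N | ‖z‖ ≤ 1} := by
  have : Nonempty (Fin N) := ⟨⟨0, hN⟩⟩
  have : Nontrivial (EN N) := inferInstance
  obtain ⟨G, hG0, hG⟩ := levyKernel_le (s := s) hg
  have h1 : IntegrableOn (fun z : EN N => ‖z‖ ^ (2 - (N : ℝ) - 2 * s)) (ball 0 2) := by
    have := (integrableOn_fun_norm_addHaar (E := EN N) (volume)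
      (f := fun y : ℝ => y ^ (2 - (N : ℝ) - 2 * s)) (r := 2)).2 ?_
    · exact this
    · have h2 : IntegrableOn (fun y : ℝ => y ^ (1 - 2 * s)) (Ioo 0 2) :=
        (intervalIntegral.integrableOn_Ioo_rpow_iff (by norm_num)).2 (by have := hs.2; linarith)
      refine h2.congr_fun (fun y hy => ?_) measurableSet_Ioo
      have hy0 : 0 < y := hy.1
      simp only [smul_eq_mul, finrank_euclideanSpace, Fintype.card_fin]
      rw [← Real.rpow_natCast, ← Real.rpow_add hy0]
      congr 1
      rw [Nat.cast_sub hN]; push_cast; ring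
  have hms : MeasurableSet {z : EN N | ‖z‖ ≤ 1} := measurableSet_le measurable_norm measurable_const
  have h1' := (h1.mono_set (s := {z : EN N | ‖z‖ ≤ 1}) (fun z (hz : ‖z‖ ≤ 1) => by
    rw [mem_ball_zero_iff]; linarith)).const_mul G
  refine Integrable.mono' h1' ?_ ?_
  · have := levyKernel_measurable (s := s) hg
    exact Measurable.aestronglyMeasurable (by fun_prop)
  · refine (ae_restrict_iff' hms).2 (Eventually.of_forall fun z _ => ?_)
    rw [Real.norm_of_nonneg (mul_nonneg (by positivity) (levyKernel_nonneg hN hs hg z))]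
    rcases eq_or_ne z 0 with rfl | hz
    · simp; positivity
    · have hz0 : 0 < ‖z‖ := norm_pos_iff.2 hz
      calc ‖z‖ ^ 2 * levyKernel N s g z ≤ ‖z‖ ^ 2 * (G * ‖z‖ ^ (-(N : ℝ) - 2 * s)) := by
            gcongr; exact hG z
        _ = G * ‖z‖ ^ (2 - (N : ℝ) - 2 * s) := by
            rw [show (2 - (N : ℝ) - 2 * s) = 2 + (-(N : ℝ) - 2 * s) by ring, Real.rpow_add hz0,
              Real.rpow_two]
            ring

/-- The second moment of the kernel on the ball of radius `r`. -/
noncomputable def nearMass (N : ℕ) (s : ℝ) (g : EN N → ℝ) (r : ℝ) : ℝ :=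
  ∫ z in {z : EN N | ‖z‖ ≤ r}, ‖z‖ ^ 2 * levyKernel N s g z

/-- The mass of the kernel outside the ball of radius `r`. -/
noncomputable def farMass (N : ℕ) (s : ℝ) (g : EN N → ℝ) (r : ℝ) : ℝ :=
  ∫ z in {z : EN N | r < ‖z‖}, levyKernel N s g z

lemma nearMass_nonneg (hN : 1 ≤ N) (hs : s ∈ Ioo (0:ℝ) 1) (hg : H1 N g) (r : ℝ) :
    0 ≤ nearMass N s g r :=
  integral_nonneg fun z => mul_nonneg (by positivity) (levyKernel_nonneg hN hs hg z)

lemma farMass_nonneg (hN : 1 ≤ N) (hs : s ∈ Ioo (0:ℝ) 1) (hg : H1 N g) (r : ℝ) :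
    0 ≤ farMass N s g r :=
  integral_nonneg fun z => levyKernel_nonneg hN hs hg z

lemma exists_nearMass_le (hN : 1 ≤ N) (hs : s ∈ Ioo (0:ℝ) 1) (hg : H1 N g) {e : ℝ} (he : 0 < e) :
    ∃ r : ℝ, 0 < r ∧ r ≤ 1 ∧ nearMass N s g r ≤ e := by
  have : Nonempty (Fin N) := ⟨⟨0, hN⟩⟩
  have : Nontrivial (EN N) := inferInstance
  have ht := tendsto_setIntegral_of_antitone (μ := (volume : Measure (EN N)))
    (f := fun z => ‖z‖ ^ 2 * levyKernel N s g z)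
    (s := fun n : ℕ => {z : EN N | ‖z‖ ≤ 1 / ((n : ℝ) + 1)})
    (fun n => measurableSet_le measurable_norm measurable_const)
    (fun m n hmn z (hz : ‖z‖ ≤ _) => hz.trans (Nat.one_div_le_one_div hmn))
    ⟨0, by simpa using levyKernel_integrableOn_near hN hs hg⟩
  have hz : ∫ z in ⋂ n : ℕ, {z : EN N | ‖z‖ ≤ 1 / ((n : ℝ) + 1)},
      ‖z‖ ^ 2 * levyKernel N s g z = 0 := by
    have : (⋂ n : ℕ, {z : EN N | ‖z‖ ≤ 1 / ((n : ℝ) + 1)}) ⊆ {0} := by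
      intro z hz
      rw [mem_iInter] at hz
      have := ge_of_tendsto' (tendsto_one_div_add_atTop_nhds_zero_nat (𝕜 := ℝ)) hz
      simpa using this
    rw [Measure.restrict_eq_zero.2 (measure_mono_null this (by simp))]
    simp
  rw [hz] at ht
  obtain ⟨n, hn⟩ := (ht.eventually (Iio_mem_nhds he)).exists
  refine ⟨1 / ((n : ℝ) + 1), by positivity, ?_, le_of_lt hn⟩
  rw [div_le_one (by positivity)]
  linarith [n.cast_nonneg (α := ℝ)]

lemma levyKernel_lower (hs : s ∈ Ioo (0:ℝ) 1) (hg : H1 N g) {R : ℝ} (hR : 1 ≤ R) :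
    ∃ κ : ℝ, 0 < κ ∧ ∀ z : EN N, 1 ≤ ‖z‖ → ‖z‖ ≤ R → κ ≤ levyKernel N s g z := by
  have hR0 : 0 < R := by linarith
  by_cases hne : (sphere (0 : EN N) 1).Nonempty
  · obtain ⟨w, hw, hmin⟩ := (isCompact_sphere (0 : EN N) 1).exists_isMinOn hne hg.1.continuousOn
    have hgw : 0 < g w := hg.2.1 w (by simpa using hw)
    refine ⟨g w * R ^ (-(N : ℝ) - 2 * s), by positivity, fun z hz1 hzR => ?_⟩
    have hz0 : 0 < ‖z‖ := by linarith
    have h1 : ‖(‖z‖⁻¹ • z)‖ = 1 := by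
      rw [norm_smul, norm_inv, norm_norm, inv_mul_cancel₀ hz0.ne']
    unfold levyKernel
    refine mul_le_mul (hmin (by simpa using h1)) ?_ (by positivity) (hg.2.1 _ h1).le
    refine Real.rpow_le_rpow_of_nonpos hz0 hzR ?_
    have := hs.1
    have : (0:ℝ) ≤ N := by positivity
    linarith
  · refine ⟨1, one_pos, fun z hz1 _ => (hne ⟨‖z‖⁻¹ • z, ?_⟩).elim⟩
    have hz0 : 0 < ‖z‖ := by linarith
    rw [mem_sphere_zero_iff_norm, norm_smul, norm_inv, norm_norm, inv_mul_cancel₀ hz0.ne']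

lemma levyI1_abs_le (hN : 1 ≤ N) (hs : s ∈ Ioo (0:ℝ) 1) (hg : H1 N g) {r : ℝ} (hr1 : r ≤ 1)
    {φ : EN N → ℝ} {x : EN N} {C : ℝ}
    (h : ∀ z, |φ (x + z) - φ x - fderiv ℝ φ x z| ≤ C * ‖z‖ ^ 2) :
    |levyI1 N s g φ r x| ≤ C * nearMass N s g r := by
  unfold levyI1 nearMass
  rw [← integral_const_mul, ← Real.norm_eq_abs]
  refine norm_integral_le_of_norm_le (Integrable.const_mul
    ((levyKernel_integrableOn_near hN hs hg).mono_set fun z (hz : ‖z‖ ≤ r) => hz.trans hr1) _)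
    (Eventually.of_forall fun z => ?_)
  rw [norm_mul, Real.norm_eq_abs, Real.norm_of_nonneg (levyKernel_nonneg hN hs hg z), ← mul_assoc]
  exact mul_le_mul_of_nonneg_right (h z) (levyKernel_nonneg hN hs hg z)

lemma levyI1_const (c r : ℝ) (x : EN N) : levyI1 N s g (fun _ => c) r x = 0 := by
  simp [levyI1]

lemma levyI2_const (c r : ℝ) (x : EN N) : levyI2 N s g (fun _ => c) r x = 0 := by
  simp [levyI2]

lemma levyI2_integrable (hN : 1 ≤ N) (hs : s ∈ Ioo (0:ℝ) 1) (hg : H1 N g) {r : ℝ} (hr : 0 < r)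
    {u : EN N → ℝ} (hu : Continuous u) {M : ℝ} (hM : ∀ x, |u x| ≤ M) (x : EN N) :
    IntegrableOn (fun z => (u (x + z) - u x) * levyKernel N s g z) {z : EN N | r < ‖z‖} := by
  refine Integrable.bdd_mul (c := 2 * M) (levyKernel_integrableOn_far hN hs hg hr)
    (Continuous.aestronglyMeasurable (by fun_prop)) (Eventually.of_forall fun z => ?_)
  rw [Real.norm_eq_abs]
  calc _ ≤ |u (x + z)| + |u x| := abs_sub _ _
    _ ≤ _ := by linarith [hM (x + z), hM x]

/-- Comparison of the nonlocal terms when the increments are ordered up to a constant. -/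
lemma levyI2_le (hN : 1 ≤ N) (hs : s ∈ Ioo (0:ℝ) 1) (hg : H1 N g) {r : ℝ} (hr : 0 < r)
    {u v : EN N → ℝ} (hu : Continuous u) (hv : Continuous v) {M M' : ℝ} (hM : ∀ x, |u x| ≤ M)
    (hM' : ∀ x, |v x| ≤ M') {x x' : EN N} {c : ℝ}
    (h : ∀ z, u (x + z) - u x ≤ v (x' + z) - v x' + c) :
    levyI2 N s g u r x ≤ levyI2 N s g v r x' + c * farMass N s g r := by
  unfold levyI2 farMass
  rw [← integral_const_mul, ← integral_add (levyI2_integrable hN hs hg hr hv hM' x')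
    ((levyKernel_integrableOn_far hN hs hg hr).const_mul c)]
  refine integral_mono (levyI2_integrable hN hs hg hr hu hM x)
    ((levyI2_integrable hN hs hg hr hv hM' x').add
      ((levyKernel_integrableOn_far hN hs hg hr).const_mul c)) fun z => ?_
  have := mul_le_mul_of_nonneg_right (h z) (levyKernel_nonneg hN hs hg z)
  simp only
  linarith

end Kernel

/-! ### Perturbed maxima -/

section Bump

/-- A `C²` bump at the origin, supported in the unit ball, with a quadratic Taylor remainder and a
bounded differential. -/
lemma exists_bump (E : Type*) [NormedAddCommGroup E] [InnerProductSpace ℝ E]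
    [FiniteDimensional ℝ E] :
    ∃ (χ : E → ℝ) (B : ℝ), 0 ≤ B ∧ ContDiff ℝ 2 χ ∧ (∀ x, 0 ≤ χ x) ∧ (∀ x, χ x ≤ 1) ∧ χ 0 = 1 ∧
      (∀ x, 1 < ‖x‖ → χ x = 0) ∧ (∀ x, ‖fderiv ℝ χ x‖ ≤ B) ∧
      (∀ x z, |χ (x + z) - χ x - fderiv ℝ χ x z| ≤ B * ‖z‖ ^ 2) := by
  let f : ContDiffBump (0 : E) := ⟨1 / 2, 1, by norm_num, by norm_num⟩
  have hf : ContDiff ℝ 2 f := f.contDiff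
  have hf1 : ContDiff ℝ 1 (fderiv ℝ f) := hf.fderiv_right (by norm_num)
  have hcs : HasCompactSupport f := f.hasCompactSupport
  obtain ⟨B₁, hB₁⟩ := (hcs.fderiv ℝ).exists_bound_of_continuous hf1.continuous
  obtain ⟨B₂, hB₂⟩ := ContDiff.lipschitzWith_of_hasCompactSupport (𝕂 := ℝ) (hcs.fderiv ℝ) hf1
    (by norm_num)
  have hB₁0 : 0 ≤ B₁ := (norm_nonneg _).trans (hB₁ 0)
  refine ⟨f, B₁ + B₂, by positivity, hf, fun x => f.nonneg, fun x => f.le_one, ?_, ?_, ?_, ?_⟩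
  · exact f.one_of_mem_closedBall (by simp [f])
  · intro x hx
    exact f.zero_of_le_dist (by simpa [f] using hx.le)
  · intro x
    linarith [hB₁ x, B₂.coe_nonneg]
  · intro x z
    have hd : Differentiable ℝ f := hf.differentiable (by norm_num)
    have := (convex_closedBall x ‖z‖).norm_image_sub_le_of_norm_hasFDerivWithin_le'
      (f := f) (f' := fderiv ℝ f) (φ := fderiv ℝ f x) (C := B₂ * ‖z‖)
      (fun y _ => (hd y).hasFDerivAt.hasFDerivWithinAt)
      (fun y hy => by
        have h1 := hB₂.dist_le_mul y x
        rw [dist_eq_norm, dist_eq_norm] at h1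
        rw [mem_closedBall, dist_eq_norm] at hy
        exact h1.trans (by gcongr))
      (mem_closedBall_self (norm_nonneg z)) (y := x + z) (by simp)
    rw [add_sub_cancel_left, Real.norm_eq_abs] at this
    refine this.trans ?_
    have : 0 ≤ B₁ * ‖z‖ ^ 2 := by positivity
    nlinarith

/-- Adding a small bump centred at a near-maximum point turns a supremum into a maximum. -/
lemma exists_max_bump {X E : Type*} [MetricSpace X] [ProperSpace X] [SeminormedAddCommGroup E]
    {D : Set X} (hD : IsClosed D) (hDne : D.Nonempty) {F : X → ℝ} (hF : ContinuousOn F D)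
    (hbdd : BddAbove (F '' D)) {π : X → E} (hπ : Continuous π)
    (hcpt : ∀ e c, Bornology.IsBounded {x | x ∈ D ∧ c ≤ F x ∧ ‖π x - e‖ ≤ 1})
    {Ξ : E → ℝ} (hΞ : Continuous Ξ) (hΞ1 : ∀ e, Ξ e ≤ 1) (hΞz : Ξ 0 = 1)
    (hΞs : ∀ e, 1 < ‖e‖ → Ξ e = 0) {δ : ℝ} (hδ : 0 < δ) :
    ∃ e, ∃ x ∈ D, (∀ y ∈ D, F y + δ * Ξ (π y - e) ≤ F x + δ * Ξ (π x - e)) ∧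
      ∀ y ∈ D, F y ≤ F x + δ := by
  obtain ⟨_, ⟨xs, hxs, rfl⟩, hlt⟩ := exists_lt_of_lt_csSup (hDne.image F)
    (show sSup (F '' D) - δ / 2 < sSup (F '' D) by linarith)
  have hsup : ∀ y ∈ D, F y < F xs + δ / 2 := fun y hy => by
    have := le_csSup hbdd (mem_image_of_mem F hy)
    linarith
  set e := π xs
  set K := {x | x ∈ D ∧ F xs ≤ F x ∧ ‖π x - e‖ ≤ 1}
  have hKc : IsClosed K := by
    have h1 : IsClosed (D ∩ F ⁻¹' Ici (F xs)) := hF.preimage_isClosed_of_isClosed hD isClosed_Ici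
    have h2 : IsClosed {x | ‖π x - e‖ ≤ 1} := isClosed_le (by fun_prop) continuous_const
    have : K = (D ∩ F ⁻¹' Ici (F xs)) ∩ {x | ‖π x - e‖ ≤ 1} := by
      ext x
      exact ⟨fun h => ⟨⟨h.1, h.2.1⟩, h.2.2⟩, fun h => ⟨h.1.1, h.1.2, h.2⟩⟩
    rw [this]; exact h1.inter h2
  have hKK : IsCompact K := Metric.isCompact_of_isClosed_isBounded hKc (hcpt _ _)
  have hxK : xs ∈ K := ⟨hxs, le_rfl, by simp [e]⟩
  have hcont : ContinuousOn (fun x => F x + δ * Ξ (π x - e)) K :=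
    (hF.mono fun x hx => hx.1).add (Continuous.continuousOn (by fun_prop))
  obtain ⟨x, hx, hmax⟩ := hKK.exists_isMaxOn ⟨xs, hxK⟩ hcont
  have hms : F xs + δ ≤ F x + δ * Ξ (π x - e) := by
    have := hmax hxK
    simpa [e, hΞz] using this
  have hall : ∀ y ∈ D, F y + δ * Ξ (π y - e) ≤ F x + δ * Ξ (π x - e) := by
    intro y hy
    by_cases hyK : y ∈ K
    · exact hmax hyK
    · rcases lt_or_ge (F y) (F xs) with h | h
      · nlinarith [hΞ1 (π y - e)]
      · have : 1 < ‖π y - e‖ := by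
          by_contra hc
          exact hyK ⟨hy, h, not_lt.1 hc⟩
        rw [hΞs _ this]
        linarith [hsup y hy]
  refine ⟨e, x, hx.1, hall, fun y hy => ?_⟩
  have := hsup y hy
  nlinarith [hΞ1 (π x - e)]

end Bump

/-! ### Solutions without initial datum, and their translates -/

/-- The viscosity subsolution inequality of the `(N+1)`-dimensional problem. -/
def SubTest (N : ℕ) (s : ℝ) (g : EN N → ℝ) (W : ℝ → ℝ) (σ : ℝ → EN N → ℝ) (p : EN N)
    (L a₀ η : ℝ) (U : ℝ → EN N → ℝ → ℝ) : Prop :=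
  ∀ (t₀ : ℝ) (y₀ : EN N) (yn₀ : ℝ), 0 < t₀ →
    ∀ (φ : ℝ → EN N → ℝ → ℝ),
      ContDiff ℝ 2 (fun q : ℝ × EN N × ℝ => φ q.1 q.2.1 q.2.2) →
    ∀ τ r : ℝ, 0 < τ → τ < t₀ → 0 < r →
    (∀ t y yn, t ∈ Ioo (t₀ - τ) (t₀ + τ) → ‖y - y₀‖ < r → |yn - yn₀| < r →
      U t y yn - φ t y yn ≤ U t₀ y₀ yn₀ - φ t₀ y₀ yn₀) →
    deriv (fun t => φ t y₀ yn₀) t₀ ≤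
      L + (levyI1 N s g (fun y => φ t₀ y yn₀) r y₀ + levyI2 N s g (fun y => U t₀ y yn₀) r y₀)
        - deriv W (U t₀ y₀ yn₀ + ⟪p, y₀⟫ + yn₀) + σ t₀ y₀
        + η * (a₀ + (⨅ q : EN N × ℝ, U t₀ q.1 q.2) - U t₀ y₀ yn₀)
          * |deriv (fun yn => φ t₀ y₀ yn) yn₀ + 1|

/-- The viscosity supersolution inequality of the `(N+1)`-dimensional problem. -/
def SuperTest (N : ℕ) (s : ℝ) (g : EN N → ℝ) (W : ℝ → ℝ) (σ : ℝ → EN N → ℝ) (p : EN N)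
    (L a₀ η : ℝ) (U : ℝ → EN N → ℝ → ℝ) : Prop :=
  ∀ (t₀ : ℝ) (y₀ : EN N) (yn₀ : ℝ), 0 < t₀ →
    ∀ (φ : ℝ → EN N → ℝ → ℝ),
      ContDiff ℝ 2 (fun q : ℝ × EN N × ℝ => φ q.1 q.2.1 q.2.2) →
    ∀ τ r : ℝ, 0 < τ → τ < t₀ → 0 < r →
    (∀ t y yn, t ∈ Ioo (t₀ - τ) (t₀ + τ) → ‖y - y₀‖ < r → |yn - yn₀| < r →
      U t₀ y₀ yn₀ - φ t₀ y₀ yn₀ ≤ U t y yn - φ t y yn) →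
      L + (levyI1 N s g (fun y => φ t₀ y yn₀) r y₀ + levyI2 N s g (fun y => U t₀ y yn₀) r y₀)
        - deriv W (U t₀ y₀ yn₀ + ⟪p, y₀⟫ + yn₀) + σ t₀ y₀
        + η * (a₀ + (⨅ q : EN N × ℝ, U t₀ q.1 q.2) - U t₀ y₀ yn₀)
          * |deriv (fun yn => φ t₀ y₀ yn) yn₀ + 1| ≤
    deriv (fun t => φ t y₀ yn₀) t₀

/-- A viscosity solution of the `(N+1)`-dimensional problem, continuous and bounded on finite
time intervals, with no prescribed initial datum. -/
structure GenSol (N : ℕ) (s : ℝ) (g : EN N → ℝ) (W : ℝ → ℝ) (σ : ℝ → EN N → ℝ) (p : EN N)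
    (L a₀ η : ℝ) (U : ℝ → EN N → ℝ → ℝ) : Prop where
  cont : ContinuousOn (fun q : ℝ × EN N × ℝ => U q.1 q.2.1 q.2.2) (Ici 0 ×ˢ univ)
  bdd : ∀ T, ∃ M, ∀ t ∈ Icc (0:ℝ) T, ∀ (y : EN N) (yn : ℝ), |U t y yn| ≤ M
  sub : SubTest N s g W σ p L a₀ η U
  sup : SuperTest N s g W σ p L a₀ η U

section Basic

variable {N : ℕ} {s : ℝ} {g : EN N → ℝ} {W : ℝ → ℝ} {σ : ℝ → EN N → ℝ} {p : EN N}
  {L a₀ η : ℝ} {U : ℝ → EN N → ℝ → ℝ}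

lemma GenSol.cont_slice (hU : GenSol N s g W σ p L a₀ η U) {t : ℝ} (ht : 0 ≤ t) :
    Continuous fun q : EN N × ℝ => U t q.1 q.2 := by
  have : ContinuousOn (fun q : EN N × ℝ => U t q.1 q.2) univ :=
    hU.cont.comp (f := fun q : EN N × ℝ => (t, q.1, q.2)) (by fun_prop) fun q _ => ⟨ht, trivial⟩
  exact continuousOn_univ.1 this

lemma GenSol.cont_y (hU : GenSol N s g W σ p L a₀ η U) {t : ℝ} (ht : 0 ≤ t) (yn : ℝ) :
    Continuous fun y : EN N => U t y yn :=
  (hU.cont_slice ht).comp (by fun_prop : Continuous fun y : EN N => (y, yn))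

lemma GenSol.bdd_slice (hU : GenSol N s g W σ p L a₀ η U) {t : ℝ} (ht : 0 ≤ t) :
    ∃ M, ∀ (y : EN N) (yn : ℝ), |U t y yn| ≤ M := by
  obtain ⟨M, hM⟩ := hU.bdd t
  exact ⟨M, hM t ⟨ht, le_rfl⟩⟩

lemma GenSol.bddBelow_slice (hU : GenSol N s g W σ p L a₀ η U) {t : ℝ} (ht : 0 ≤ t) :
    BddBelow (range fun q : EN N × ℝ => U t q.1 q.2) := by
  obtain ⟨M, hM⟩ := hU.bdd_slice ht
  refine ⟨-M, ?_⟩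
  rintro _ ⟨q, rfl⟩
  exact (abs_le.1 (hM q.1 q.2)).1

lemma GenSol.iInf_le (hU : GenSol N s g W σ p L a₀ η U) {t : ℝ} (ht : 0 ≤ t) (y : EN N) (yn : ℝ) :
    (⨅ q : EN N × ℝ, U t q.1 q.2) ≤ U t y yn :=
  ciInf_le (hU.bddBelow_slice ht) (y, yn)

lemma levyI1_translate (f : EN N → ℝ) (m : EN N) (r : ℝ) (x : EN N) :
    levyI1 N s g (fun y => f (y - m)) r (x + m) = levyI1 N s g f r x := by
  unfold levyI1
  congr 1
  ext z
  simp only [fderiv_comp_sub, add_sub_cancel_right]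
  rw [show x + m + z - m = x + z by abel]

lemma levyI2_translate (f : EN N → ℝ) (m : EN N) (c r : ℝ) (x : EN N) :
    levyI2 N s g f r (x + m) = levyI2 N s g (fun y => f (y + m) + c) r x := by
  unfold levyI2
  congr 1
  ext z
  rw [show x + m + z = x + z + m by abel]
  ring

/-- The equation is invariant under integer time shifts and under space shifts `(m, h)` combined
with the addition of `c`, when `p · m + h - c` is an integer and `m` is a period of `σ`. -/
lemma GenSol.translate (hU : GenSol N s g W σ p L a₀ η U) (k : ℕ) (m : EN N) (h c : ℝ) (j : ℤ)
    (hσt : ∀ t x, σ (t + k) x = σ t x) (hσm : ∀ t x, σ t (x + m) = σ t x)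
    (hW : ∀ v, deriv W (v + j) = deriv W v) (hj : ⟪p, m⟫ + h - c = j) :
    GenSol N s g W σ p L a₀ η (fun t y yn => U (t + k) (y + m) (yn + h) + c) := by
  have hk : (0:ℝ) ≤ k := k.cast_nonneg
  have hinf : ∀ t : ℝ, 0 ≤ t → (⨅ q : EN N × ℝ, (U (t + k) (q.1 + m) (q.2 + h) + c)) =
      (⨅ q : EN N × ℝ, U (t + k) q.1 q.2) + c := by
    intro t ht
    have h1 := Function.Surjective.iInf_comp (f := fun q : EN N × ℝ => (q.1 + m, q.2 + h))
      (fun q => ⟨(q.1 - m, q.2 - h), by simp⟩) (fun q => U (t + k) q.1 q.2 + c)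
    rw [h1, ciInf_add (hU.bddBelow_slice (by positivity))]
  have hWW : ∀ (t : ℝ) (y : EN N) (yn : ℝ),
      deriv W (U (t + k) (y + m) (yn + h) + ⟪p, y + m⟫ + (yn + h)) =
      deriv W (U (t + k) (y + m) (yn + h) + c + ⟪p, y⟫ + yn) := by
    intro t y yn
    rw [← hW (U (t + k) (y + m) (yn + h) + c + ⟪p, y⟫ + yn), ← hj, inner_add_right]
    congr 1; ring
  have hσ' : ∀ t x, σ (t + k) (x + m) = σ t x := fun t x => by rw [hσm, hσt]
  have hφC : ∀ φ : ℝ → EN N → ℝ → ℝ, ContDiff ℝ 2 (fun q : ℝ × EN N × ℝ => φ q.1 q.2.1 q.2.2) →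
      ContDiff ℝ 2 (fun q : ℝ × EN N × ℝ => φ (q.1 - k) (q.2.1 - m) (q.2.2 - h)) := fun φ hφ =>
    hφ.comp (f := fun q : ℝ × EN N × ℝ => (q.1 - k, q.2.1 - m, q.2.2 - h)) (by fun_prop)
  refine ⟨?_, ?_, ?_, ?_⟩
  · refine ContinuousOn.add (hU.cont.comp
      (f := fun q : ℝ × EN N × ℝ => (q.1 + k, q.2.1 + m, q.2.2 + h)) (by fun_prop) ?_)
      continuousOn_const
    rintro q ⟨hq, -⟩
    exact ⟨add_nonneg hq hk, trivial⟩
  · intro T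
    obtain ⟨M, hM⟩ := hU.bdd (T + k)
    refine ⟨M + |c|, fun t ht y yn => (abs_add_le _ _).trans ?_⟩
    gcongr
    exact hM _ ⟨add_nonneg ht.1 hk, by linarith [ht.2]⟩ _ _
  · intro t₀ y₀ yn₀ ht₀ φ hφ τ r hτ hτt hr hmax
    have := hU.sub (t₀ + k) (y₀ + m) (yn₀ + h) (by positivity)
      (fun t y yn => φ (t - k) (y - m) (yn - h)) (hφC φ hφ) τ r hτ (by linarith) hr
      (fun t y yn ht hy hyn => by
        have := hmax (t - k) (y - m) (yn - h) ⟨by linarith [ht.1], by linarith [ht.2]⟩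
          (by rwa [sub_sub, add_comm m]) (by rwa [sub_sub, add_comm h])
        simp only [sub_add_cancel, add_sub_cancel_right] at this ⊢
        linarith)
    simp only [add_sub_cancel_right] at this
    rw [deriv_comp_sub_const (f := fun t => φ t y₀ yn₀),
      deriv_comp_sub_const (f := fun yn => φ t₀ y₀ yn),
      levyI1_translate (fun y => φ t₀ y yn₀), levyI2_translate _ _ c, hWW, hσ'] at this
    simp only [add_sub_cancel_right] at this
    rw [hinf t₀ ht₀.le]
    rwa [show a₀ + ((⨅ q : EN N × ℝ, U (t₀ + k) q.1 q.2) + c) - (U (t₀ + k) (y₀ + m) (yn₀ + h) + c)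
      = a₀ + (⨅ q : EN N × ℝ, U (t₀ + k) q.1 q.2) - U (t₀ + k) (y₀ + m) (yn₀ + h) by ring]
  · intro t₀ y₀ yn₀ ht₀ φ hφ τ r hτ hτt hr hmax
    have := hU.sup (t₀ + k) (y₀ + m) (yn₀ + h) (by positivity)
      (fun t y yn => φ (t - k) (y - m) (yn - h)) (hφC φ hφ) τ r hτ (by linarith) hr
      (fun t y yn ht hy hyn => by
        have := hmax (t - k) (y - m) (yn - h) ⟨by linarith [ht.1], by linarith [ht.2]⟩
          (by rwa [sub_sub, add_comm m]) (by rwa [sub_sub, add_comm h])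
        simp only [sub_add_cancel, add_sub_cancel_right] at this ⊢
        linarith)
    simp only [add_sub_cancel_right] at this
    rw [deriv_comp_sub_const (f := fun t => φ t y₀ yn₀),
      deriv_comp_sub_const (f := fun yn => φ t₀ y₀ yn),
      levyI1_translate (fun y => φ t₀ y yn₀), levyI2_translate _ _ c, hWW, hσ'] at this
    simp only [add_sub_cancel_right] at this
    rw [hinf t₀ ht₀.le]
    rwa [show a₀ + ((⨅ q : EN N × ℝ, U (t₀ + k) q.1 q.2) + c) - (U (t₀ + k) (y₀ + m) (yn₀ + h) + c)
      = a₀ + (⨅ q : EN N × ℝ, U (t₀ + k) q.1 q.2) - U (t₀ + k) (y₀ + m) (yn₀ + h) by ring]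

end Basic

/-! ### Test functions -/

/-- The properties of a pair of bumps, one in `y` and one in `y_{N+1}`, used for localisation. -/
structure IsBumpPair (N : ℕ) (χ₁ : EN N → ℝ) (χ₂ : ℝ → ℝ) (B : ℝ) : Prop where
  B_nonneg : 0 ≤ B
  smooth₁ : ContDiff ℝ 2 χ₁
  smooth₂ : ContDiff ℝ 2 χ₂
  nonneg : ∀ e : EN N × ℝ, 0 ≤ χ₁ e.1 * χ₂ e.2
  le_one : ∀ e : EN N × ℝ, χ₁ e.1 * χ₂ e.2 ≤ 1
  at_zero : χ₁ 0 * χ₂ 0 = 1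
  supp : ∀ e : EN N × ℝ, 1 < ‖e‖ → χ₁ e.1 * χ₂ e.2 = 0
  abs_le₁ : ∀ y, |χ₁ y| ≤ 1
  abs_le₂ : ∀ y, |χ₂ y| ≤ 1
  deriv_le : ∀ y, |deriv χ₂ y| ≤ B
  taylor : ∀ x z, |χ₁ (x + z) - χ₁ x - fderiv ℝ χ₁ x z| ≤ B * ‖z‖ ^ 2

lemma exists_bumpPair (N : ℕ) : ∃ χ₁ χ₂ B, IsBumpPair N χ₁ χ₂ B := by
  obtain ⟨χ₁, B₁, hB₁, hs₁, hn₁, ho₁, hz₁, hsp₁, -, ht₁⟩ := exists_bump (EN N)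
  obtain ⟨χ₂, B₂, hB₂, hs₂, hn₂, ho₂, hz₂, hsp₂, hd₂, -⟩ := exists_bump ℝ
  refine ⟨χ₁, χ₂, B₁ + B₂, by positivity, hs₁, hs₂, fun e => mul_nonneg (hn₁ _) (hn₂ _),
    fun e => mul_le_one₀ (ho₁ _) (hn₂ _) (ho₂ _), by rw [hz₁, hz₂, one_mul], ?_, ?_, ?_, ?_, ?_⟩
  · intro e he
    rw [Prod.norm_def] at he
    rcases lt_max_iff.1 he with h | h
    · rw [hsp₁ _ h, zero_mul]
    · rw [hsp₂ _ h, mul_zero]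
  · intro y; rw [abs_of_nonneg (hn₁ y)]; exact ho₁ y
  · intro y; rw [abs_of_nonneg (hn₂ y)]; exact ho₂ y
  · intro y
    have := hd₂ y
    rw [← norm_deriv_eq_norm_fderiv, Real.norm_eq_abs] at this
    linarith
  · intro x z
    refine (ht₁ x z).trans ?_
    gcongr
    linarith

/-- The family of test functions used throughout: a function of time, a quadratic penalisation in
space, and a localising bump with a time-dependent amplitude. -/
noncomputable def testFn {N : ℕ} (χ₁ : EN N → ℝ) (χ₂ : ℝ → ℝ) (α ρ : ℝ → ℝ) (b : ℝ) (z : EN N)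
    (zn : ℝ) (e : EN N × ℝ) (t : ℝ) (y : EN N) (yn : ℝ) : ℝ :=
  α t + b * (‖y - z‖ ^ 2 + (yn - zn) ^ 2) + ρ t * (χ₁ (y - e.1) * χ₂ (yn - e.2))

section Test

variable {N : ℕ} {χ₁ : EN N → ℝ} {χ₂ : ℝ → ℝ} {B : ℝ}

lemma testFn_contDiff (hχ : IsBumpPair N χ₁ χ₂ B) {α ρ : ℝ → ℝ} (hα : ContDiff ℝ 2 α)
    (hρ : ContDiff ℝ 2 ρ) (b : ℝ) (z : EN N) (zn : ℝ) (e : EN N × ℝ) :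
    ContDiff ℝ 2 (fun q : ℝ × EN N × ℝ => testFn χ₁ χ₂ α ρ b z zn e q.1 q.2.1 q.2.2) := by
  have h1 := hχ.smooth₁
  have h2 := hχ.smooth₂
  unfold testFn
  have h3 : ContDiff ℝ 2 (fun q : ℝ × EN N × ℝ => ‖q.2.1 - z‖ ^ 2) :=
    ContDiff.norm_sq ℝ (by fun_prop)
  have h4 : ContDiff ℝ 2 (fun q : ℝ × EN N × ℝ => χ₁ (q.2.1 - e.1)) := h1.comp (by fun_prop)
  have h5 : ContDiff ℝ 2 (fun q : ℝ × EN N × ℝ => χ₂ (q.2.2 - e.2)) := h2.comp (by fun_prop)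
  have h6 : ContDiff ℝ 2 (fun q : ℝ × EN N × ℝ => α q.1) := hα.comp (by fun_prop)
  have h7 : ContDiff ℝ 2 (fun q : ℝ × EN N × ℝ => ρ q.1) := hρ.comp (by fun_prop)
  exact (h6.add (contDiff_const.mul (h3.add (by fun_prop)))).add (h7.mul (h4.mul h5))

lemma testFn_deriv_t {α ρ : ℝ → ℝ} {α' ρ' : ℝ} {t : ℝ} (hα : HasDerivAt α α' t)
    (hρ : HasDerivAt ρ ρ' t) (b : ℝ) (z : EN N) (zn : ℝ) (e : EN N × ℝ) (y : EN N) (yn : ℝ) :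
    deriv (fun t => testFn χ₁ χ₂ α ρ b z zn e t y yn) t =
      α' + ρ' * (χ₁ (y - e.1) * χ₂ (yn - e.2)) :=
  ((hα.add_const _).add (hρ.mul_const _)).deriv

lemma testFn_deriv_yn (hχ : IsBumpPair N χ₁ χ₂ B) (α ρ : ℝ → ℝ) (t : ℝ)
    (b : ℝ) (z : EN N) (zn : ℝ) (e : EN N × ℝ) (y : EN N) (yn : ℝ) :
    deriv (fun yn => testFn χ₁ χ₂ α ρ b z zn e t y yn) yn =
      2 * b * (yn - zn) + ρ t * (χ₁ (y - e.1) * deriv χ₂ (yn - e.2)) := by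
  have h2 : HasDerivAt χ₂ (deriv χ₂ (yn - e.2)) (yn - e.2) :=
    (hχ.smooth₂.differentiable (by norm_num) _).hasDerivAt
  have h3 : HasDerivAt (fun yn => χ₂ (yn - e.2)) (deriv χ₂ (yn - e.2)) yn := h2.comp_sub_const _ _
  have h4 : HasDerivAt (fun yn : ℝ => (yn - zn) ^ 2) (2 * (yn - zn)) yn := by
    have := ((hasDerivAt_id yn).sub_const zn).pow 2
    refine this.congr_deriv ?_
    simp
  have := (((h4.const_add (‖y - z‖ ^ 2)).const_mul b).const_add (α t)).add
    ((h3.const_mul (χ₁ (y - e.1))).const_mul (ρ t))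
  refine this.deriv.trans ?_
  ring

lemma testFn_levyI1 {s : ℝ} {g : EN N → ℝ} (hN : 1 ≤ N) (hs : s ∈ Ioo (0:ℝ) 1) (hg : H1 N g)
    {r : ℝ} (hr1 : r ≤ 1) (hχ : IsBumpPair N χ₁ χ₂ B) (α ρ : ℝ → ℝ) (t : ℝ)
    (b : ℝ) (z : EN N) (zn : ℝ) (e : EN N × ℝ) (y : EN N) (yn : ℝ) :
    |levyI1 N s g (fun y => testFn χ₁ χ₂ α ρ b z zn e t y yn) r y| ≤
      (|b| + |ρ t| * B) * nearMass N s g r := by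
  refine levyI1_abs_le hN hs hg hr1 fun ζ => ?_
  have h1 : HasFDerivAt χ₁ (fderiv ℝ χ₁ (y - e.1)) (y - e.1) :=
    (hχ.smooth₁.differentiable (by norm_num) _).hasFDerivAt
  have h2 : HasFDerivAt (fun y => χ₁ (y - e.1)) (fderiv ℝ χ₁ (y - e.1)) y := by
    have := h1.comp y ((hasFDerivAt_id y).sub_const e.1)
    refine this.congr_fderiv ?_
    simp
  have h3 : HasFDerivAt (fun y : EN N => ‖y - z‖ ^ 2) (2 • (innerSL ℝ (y - z))) y := by
    simpa using ((hasFDerivAt_id y).sub_const z).norm_sq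
  have h4 := (((h3.add_const ((yn - zn) ^ 2)).const_mul b).const_add (α t)).add
    ((h2.mul_const (χ₂ (yn - e.2))).const_mul (ρ t))
  have h5 : fderiv ℝ (fun y => testFn χ₁ χ₂ α ρ b z zn e t y yn) y = _ := h4.fderiv
  rw [h5]
  have h6 : ‖y + ζ - z‖ ^ 2 = ‖y - z‖ ^ 2 + 2 * ⟪y - z, ζ⟫ + ‖ζ‖ ^ 2 := by
    rw [add_sub_right_comm, norm_add_sq_real]
  have h7 := hχ.taylor (y - e.1) ζ
  have h8 := hχ.abs_le₂ (yn - e.2)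
  have h9 : testFn χ₁ χ₂ α ρ b z zn e t (y + ζ) yn - testFn χ₁ χ₂ α ρ b z zn e t y yn -
      (b • 2 • innerSL ℝ (y - z) + ρ t • χ₂ (yn - e.2) • fderiv ℝ χ₁ (y - e.1)) ζ =
      b * ‖ζ‖ ^ 2 + ρ t * (χ₂ (yn - e.2) *
        (χ₁ (y - e.1 + ζ) - χ₁ (y - e.1) - fderiv ℝ χ₁ (y - e.1) ζ)) := by
    simp only [testFn, h6, add_sub_right_comm y ζ e.1]
    simp [inner_sub_left]
    ring
  rw [h9]
  refine (abs_add_le _ _).trans ?_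
  rw [abs_mul, abs_mul, abs_mul, abs_of_nonneg (sq_nonneg ‖ζ‖), add_mul, mul_assoc]
  refine add_le_add_right (mul_le_mul_of_nonneg_left ?_ (abs_nonneg _)) _
  calc _ ≤ 1 * (B * ‖ζ‖ ^ 2) := mul_le_mul h8 h7 (abs_nonneg _) zero_le_one
    _ = _ := one_mul _

variable {s : ℝ} {g : EN N → ℝ} {W : ℝ → ℝ} {σ : ℝ → EN N → ℝ} {p : EN N}
  {L a₀ η : ℝ} {U : ℝ → EN N → ℝ → ℝ}

/-- The subsolution inequality at a maximum of `U - testFn`, with the local part of the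
nonlocal operator estimated. -/
lemma GenSol.sub_apply (hN : 1 ≤ N) (hs : s ∈ Ioo (0:ℝ) 1) (hg : H1 N g)
    (hU : GenSol N s g W σ p L a₀ η U) (hχ : IsBumpPair N χ₁ χ₂ B)
    {α ρ : ℝ → ℝ} (hα : ContDiff ℝ 2 α) (hρ : ContDiff ℝ 2 ρ) {α' ρ' : ℝ} {t : ℝ}
    (hα' : HasDerivAt α α' t) (hρ' : HasDerivAt ρ ρ' t) (b : ℝ) (z : EN N) (zn : ℝ)
    (e : EN N × ℝ) (y : EN N) (yn : ℝ) {r : ℝ} (hr : 0 < r) (hr1 : r ≤ 1)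
    {τ : ℝ} (hτ : 0 < τ) (hτt : τ < t)
    (hmax : ∀ t' ∈ Ioo (t - τ) (t + τ), ∀ y' yn',
      U t' y' yn' - testFn χ₁ χ₂ α ρ b z zn e t' y' yn' ≤
        U t y yn - testFn χ₁ χ₂ α ρ b z zn e t y yn) :
    ∃ ω, |ω| ≤ B ∧ α' + ρ' * (χ₁ (y - e.1) * χ₂ (yn - e.2)) ≤
      L + ((|b| + |ρ t| * B) * nearMass N s g r + levyI2 N s g (fun y => U t y yn) r y)
        - deriv W (U t y yn + ⟪p, y⟫ + yn) + σ t y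
        + η * (a₀ + (⨅ q : EN N × ℝ, U t q.1 q.2) - U t y yn)
          * |2 * b * (yn - zn) + ρ t * ω + 1| := by
  refine ⟨χ₁ (y - e.1) * deriv χ₂ (yn - e.2), ?_, ?_⟩
  · rw [abs_mul]
    calc _ ≤ 1 * B := by gcongr; exacts [hχ.abs_le₁ _, hχ.deriv_le _]
      _ = B := one_mul B
  have := hU.sub t y yn (hτ.trans hτt) _ (testFn_contDiff hχ hα hρ b z zn e) τ r hτ hτt hr
    (fun t' y' yn' ht' _ _ => hmax t' ht' y' yn')
  rw [testFn_deriv_t hα' hρ', testFn_deriv_yn hχ] at this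
  have h1 := (abs_le.1 (testFn_levyI1 hN hs hg hr1 hχ α ρ t b z zn e y yn)).2
  linarith

/-- The supersolution inequality at a minimum of `U - testFn`, with the local part of the
nonlocal operator estimated. -/
lemma GenSol.sup_apply (hN : 1 ≤ N) (hs : s ∈ Ioo (0:ℝ) 1) (hg : H1 N g)
    (hU : GenSol N s g W σ p L a₀ η U) (hχ : IsBumpPair N χ₁ χ₂ B)
    {α ρ : ℝ → ℝ} (hα : ContDiff ℝ 2 α) (hρ : ContDiff ℝ 2 ρ) {α' ρ' : ℝ} {t : ℝ}
    (hα' : HasDerivAt α α' t) (hρ' : HasDerivAt ρ ρ' t) (b : ℝ) (z : EN N) (zn : ℝ)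
    (e : EN N × ℝ) (y : EN N) (yn : ℝ) {r : ℝ} (hr : 0 < r) (hr1 : r ≤ 1)
    {τ : ℝ} (hτ : 0 < τ) (hτt : τ < t)
    (hmin : ∀ t' ∈ Ioo (t - τ) (t + τ), ∀ y' yn',
      U t y yn - testFn χ₁ χ₂ α ρ b z zn e t y yn ≤
      U t' y' yn' - testFn χ₁ χ₂ α ρ b z zn e t' y' yn') :
    ∃ ω, |ω| ≤ B ∧
      L + (-((|b| + |ρ t| * B) * nearMass N s g r) + levyI2 N s g (fun y => U t y yn) r y)
        - deriv W (U t y yn + ⟪p, y⟫ + yn) + σ t y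
        + η * (a₀ + (⨅ q : EN N × ℝ, U t q.1 q.2) - U t y yn)
          * |2 * b * (yn - zn) + ρ t * ω + 1| ≤
      α' + ρ' * (χ₁ (y - e.1) * χ₂ (yn - e.2)) := by
  refine ⟨χ₁ (y - e.1) * deriv χ₂ (yn - e.2), ?_, ?_⟩
  · rw [abs_mul]
    calc _ ≤ 1 * B := by gcongr; exacts [hχ.abs_le₁ _, hχ.deriv_le _]
      _ = B := one_mul B
  have := hU.sup t y yn (hτ.trans hτt) _ (testFn_contDiff hχ hα hρ b z zn e) τ r hτ hτt hr
    (fun t' y' yn' ht' _ _ => hmin t' ht' y' yn')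
  rw [testFn_deriv_t hα' hρ', testFn_deriv_yn hχ] at this
  have h1 := (abs_le.1 (testFn_levyI1 hN hs hg hr1 hχ α ρ t b z zn e y yn)).1
  linarith

end Test

/-! ### Linear barriers -/

section Barrier

variable {N : ℕ} {s : ℝ} {g : EN N → ℝ} {W : ℝ → ℝ} {σ : ℝ → EN N → ℝ} {p : EN N}
  {L a₀ η : ℝ} {U : ℝ → EN N → ℝ → ℝ} {A S : ℝ}

/-- A rate `a` for which `exp (a (t - t₁ - 1/2))` is small at `t₁` and large at `t₁ + 1`. -/
lemma exists_rate {κ H : ℝ} (hκ : 0 < κ) (hH : 0 ≤ H) :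
    ∃ a : ℝ, 0 < a ∧ Real.exp (-(a / 2)) < κ / 2 ∧ H < Real.exp (a / 2) := by
  refine ⟨2 * (2 / κ + H), by positivity, ?_, ?_⟩
  · rw [Real.exp_neg, inv_lt_comm₀ (Real.exp_pos _) (by positivity), inv_div]
    have := Real.add_one_le_exp (2 * (2 / κ + H) / 2)
    linarith
  · have := Real.add_one_le_exp (2 * (2 / κ + H) / 2)
    have : 0 < 2 / κ := by positivity
    linarith

lemma exists_small {κ c Q : ℝ} (hκ : 0 < κ) (hc : 0 < c) (hQ : 0 ≤ Q) :
    ∃ δ : ℝ, 0 < δ ∧ δ < κ ∧ δ * Q < c := by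
  refine ⟨min (κ / 2) (c / (Q + 1)), by positivity, ?_, ?_⟩
  · exact (min_le_left _ _).trans_lt (by linarith)
  · calc min (κ / 2) (c / (Q + 1)) * Q ≤ c / (Q + 1) * Q := by gcongr; exact min_le_right _ _
      _ < c := by rw [div_mul_eq_mul_div, div_lt_iff₀ (by positivity)]; nlinarith

lemma hasDerivAt_weight (c a b t : ℝ) :
    HasDerivAt (fun t => c * t + Real.exp (a * (t - b))) (c + a * Real.exp (a * (t - b))) t := by
  have h1 : HasDerivAt (fun t => a * (t - b)) a t := by
    simpa using ((hasDerivAt_id' t).sub_const b).const_mul a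
  have h2 : HasDerivAt (fun t => c * t) c t := by simpa using (hasDerivAt_id' t).const_mul c
  exact (h2.add h1.exp).congr_deriv (by ring)

lemma contDiff_weight (c a b : ℝ) :
    ContDiff ℝ 2 (fun t : ℝ => c * t + Real.exp (a * (t - b))) := by fun_prop

set_option maxHeartbeats 1000000 in
/-- Upper linear barrier. If it failed at time `t₁`, then
`U - M - c t - exp (a (t - t₁ - 1/2))` would have a positive supremum on `[0, t₁ + 1]`; the
exponential excludes the final time, the initial bound excludes `t = 0`, and a small bump of height
`δ` makes the supremum a maximum. There `inf U - U ≤ 0`, the other terms exceed their values for a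
function constant in space by `O(δ)` at most, and the strictly positive derivative of the
exponential gives the contradiction. -/
theorem GenSol.upper (hN : 1 ≤ N) (hs : s ∈ Ioo (0:ℝ) 1) (hg : H1 N g) (hη : 0 ≤ η)
    (hA : ∀ v, |deriv W v| ≤ A) (hS : ∀ t x, 0 ≤ t → |σ t x| ≤ S)
    (hU : GenSol N s g W σ p L a₀ η U) {M : ℝ} (h0 : ∀ y yn, U 0 y yn ≤ M)
    {t₁ : ℝ} (ht₁ : 0 ≤ t₁) (y₁ : EN N) (yn₁ : ℝ) :
    U t₁ y₁ yn₁ ≤ M + (L + A + S + η * a₀) * t₁ := by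
  by_contra hcon
  push Not at hcon
  set c := L + A + S + η * a₀ with hc
  obtain ⟨κ, hκ0, hκ⟩ : ∃ κ, 0 < κ ∧ U t₁ y₁ yn₁ = M + c * t₁ + κ :=
    ⟨U t₁ y₁ yn₁ - (M + c * t₁), by linarith, by ring⟩
  set T := t₁ + 1 with hT
  have hT0 : 0 ≤ T := by positivity
  obtain ⟨H, hH⟩ := hU.bdd T
  have hH0 : 0 ≤ H := (abs_nonneg _).trans (hH 0 ⟨le_rfl, hT0⟩ 0 0)
  obtain ⟨a, ha0, ha1, ha2⟩ := exists_rate hκ0 (H := H + |M| + |c| * T) (by positivity)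
  obtain ⟨χ₁, χ₂, B, hχ⟩ := exists_bumpPair N
  have hB := hχ.B_nonneg
  have hnm := nearMass_nonneg hN hs hg 1
  have hfm := farMass_nonneg hN hs hg 1
  set b := t₁ + 1 / 2 with hb
  obtain ⟨δ, hδ0, hδκ, hδ⟩ := exists_small (κ := κ / 2) (c := a * Real.exp (a * (0 - b)))
    (Q := B * nearMass N s g 1 + farMass N s g 1 + η * |a₀| * B) (by positivity) (by positivity)
    (by positivity)
  set F : ℝ × EN N × ℝ → ℝ := fun q => U q.1 q.2.1 q.2.2 - M - (c * q.1 + Real.exp (a * (q.1 - b)))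
    with hF
  set D : Set (ℝ × EN N × ℝ) := Icc 0 T ×ˢ univ with hD
  have hFle : ∀ q ∈ D, F q ≤ H + |M| + |c| * T - Real.exp (a * (q.1 - b)) := by
    rintro q ⟨hq, -⟩
    have h1 := (abs_le.1 (hH q.1 hq q.2.1 q.2.2)).2
    have h2 := neg_abs_le M
    have h3 : -(c * q.1) ≤ |c| * T := by
      calc -(c * q.1) ≤ |c * q.1| := neg_le_abs _
        _ = |c| * q.1 := by rw [abs_mul, abs_of_nonneg hq.1]
        _ ≤ |c| * T := by gcongr; exact hq.2
    simp only [hF]; linarith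
  obtain ⟨e, ⟨t, y, yn⟩, hx, hmax, hnear⟩ := exists_max_bump (X := ℝ × EN N × ℝ) (E := EN N × ℝ)
    (D := D) (isClosed_Icc.prod isClosed_univ) ⟨(0, 0, 0), ⟨le_rfl, hT0⟩, trivial⟩ (F := F)
    (((hU.cont.mono (prod_mono Icc_subset_Ici_self le_rfl)).sub continuousOn_const).sub
      (Continuous.continuousOn (by fun_prop)))
    (by
      refine ⟨H + |M| + |c| * T, ?_⟩
      rintro _ ⟨q, hq, rfl⟩
      have := hFle q hq
      linarith [Real.exp_pos (a * (q.1 - b))])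
    (π := Prod.snd) continuous_snd
    (fun e c => ((isBounded_Icc 0 T).prod (isBounded_closedBall (x := e) (r := 1))).subset
      (by
        rintro q ⟨hq, -, hqe⟩
        exact ⟨hq.1, by rwa [mem_closedBall, dist_eq_norm]⟩))
    (Ξ := fun e => χ₁ e.1 * χ₂ e.2)
    (by
      have := hχ.smooth₁.continuous
      have := hχ.smooth₂.continuous
      fun_prop)
    hχ.le_one (by simpa using hχ.at_zero) hχ.supp hδ0
  -- the value at the maximum is positive, so the maximum is neither at `0` nor at `T`
  have hpos : 0 < F (t, y, yn) := by
    have h1 := hnear (t₁, y₁, yn₁) ⟨⟨ht₁, by linarith⟩, trivial⟩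
    have h2 : F (t₁, y₁, yn₁) = κ - Real.exp (-(a / 2)) := by
      simp only [hF, hκ, hb]
      rw [show a * (t₁ - (t₁ + 1 / 2)) = -(a / 2) by ring]
      ring
    linarith
  have ht0 : 0 < t := by
    rcases hx.1.1.lt_or_eq with h | h
    · exact h
    · exfalso
      simp only at h
      subst h
      have := h0 y yn
      simp only [hF] at hpos
      linarith [Real.exp_pos (a * (0 - b))]
  have htT : t < T := by
    rcases hx.1.2.lt_or_eq with h | h
    · exact h
    · exfalso
      simp only at h
      subst h
      have := hFle _ hx
      simp only at this
      rw [show a * (T - b) = a / 2 by rw [hT, hb]; ring] at this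
      linarith
  obtain ⟨ω, hω, hineq⟩ := hU.sub_apply hN hs hg hχ (contDiff_weight c a b)
    (contDiff_const (c := -δ)) (hasDerivAt_weight c a b t) (hasDerivAt_const t (-δ)) 0 0 0 e y yn
    one_pos le_rfl (τ := min t (T - t) / 2) (by
      have : 0 < min t (T - t) := lt_min ht0 (by linarith)
      linarith) (by
      have := min_le_left t (T - t)
      linarith)
    (fun t' ht' y' yn' => by
      have h1 := min_le_left t (T - t)
      have h2 := min_le_right t (T - t)
      have := hmax (t', y', yn') ⟨⟨by linarith [ht'.1], by linarith [ht'.2]⟩, trivial⟩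
      simp only [hF, testFn, Prod.fst_sub, Prod.snd_sub] at this ⊢
      linarith)
  obtain ⟨K, hK⟩ := hU.bdd_slice ht0.le
  have hI2 := levyI2_le hN hs hg one_pos (hU.cont_y ht0.le yn) (continuous_const (y := (0:ℝ)))
    (fun y => hK y yn) (M' := 0) (by simp) (x := y) (x' := y) (c := δ) (fun z => by
      have := hmax (t, y + z, yn) ⟨hx.1, trivial⟩
      have h1 := hχ.le_one ((y, yn) - e)
      have h2 := hχ.nonneg ((y + z, yn) - e)
      simp only [hF, Prod.fst_sub, Prod.snd_sub] at this h1 h2 ⊢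
      nlinarith)
  rw [levyI2_const] at hI2
  have hinf := hU.iInf_le ht0.le y yn
  have hW' := (abs_le.1 (hA (U t y yn + ⟪p, y⟫ + yn))).1
  have hσ' := (abs_le.1 (hS t y ht0.le)).2
  have hexp : a * Real.exp (a * (0 - b)) ≤ a * Real.exp (a * (t - b)) := by gcongr
  have hzero : 2 * (0:ℝ) * (yn - 0) + -δ * ω + 1 = 1 - δ * ω := by ring
  have habs : |1 - δ * ω| ≤ 1 + δ * B := by
    calc |1 - δ * ω| ≤ |1| + |δ * ω| := abs_sub _ _
      _ ≤ 1 + δ * B := by rw [abs_one, abs_mul, abs_of_pos hδ0]; gcongr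
  have habs' : 1 - δ * B ≤ |1 - δ * ω| := by
    have := le_abs_self (1 - δ * ω)
    have h2 : δ * ω ≤ δ * B := by gcongr; exact (le_abs_self _).trans hω
    linarith
  have hη1 : η * (a₀ + (⨅ q : EN N × ℝ, U t q.1 q.2) - U t y yn) * |1 - δ * ω| ≤
      η * a₀ + δ * (η * |a₀| * B) := by
    have h1 : η * (a₀ + (⨅ q : EN N × ℝ, U t q.1 q.2) - U t y yn) * |1 - δ * ω| ≤
        η * a₀ * |1 - δ * ω| := by
      exact mul_le_mul_of_nonneg_right (mul_le_mul_of_nonneg_left (by linarith) hη) (abs_nonneg _)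
    have h2 : a₀ * (|1 - δ * ω| - 1) ≤ |a₀| * (δ * B) := by
      refine (le_abs_self _).trans ?_
      rw [abs_mul]
      gcongr
      rw [abs_le]; constructor <;> linarith
    linarith [mul_le_mul_of_nonneg_left h2 hη]
  rw [hzero] at hineq
  rw [abs_zero, abs_neg, abs_of_pos hδ0] at hineq
  simp only [zero_mul, zero_add, add_zero] at hineq hI2
  linarith

set_option maxHeartbeats 1000000 in
/-- Lower linear barrier. The argument mirrors `GenSol.upper`, except that the sign of `inf U - U` is
now unfavourable: it is at least `-δ` because the bumped minimum is almost the global one. -/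
theorem GenSol.lower (hN : 1 ≤ N) (hs : s ∈ Ioo (0:ℝ) 1) (hg : H1 N g) (hη : 0 ≤ η)
    (hA : ∀ v, |deriv W v| ≤ A) (hS : ∀ t x, 0 ≤ t → |σ t x| ≤ S)
    (hU : GenSol N s g W σ p L a₀ η U) {M : ℝ} (h0 : ∀ y yn, M ≤ U 0 y yn)
    {t₁ : ℝ} (ht₁ : 0 ≤ t₁) (y₁ : EN N) (yn₁ : ℝ) :
    M + (L - A - S + η * a₀) * t₁ ≤ U t₁ y₁ yn₁ := by
  by_contra hcon
  push Not at hcon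
  set c := L - A - S + η * a₀ with hc
  obtain ⟨κ, hκ0, hκ⟩ : ∃ κ, 0 < κ ∧ U t₁ y₁ yn₁ = M + c * t₁ - κ :=
    ⟨(M + c * t₁) - U t₁ y₁ yn₁, by linarith, by ring⟩
  set T := t₁ + 1 with hT
  have hT0 : 0 ≤ T := by positivity
  obtain ⟨H, hH⟩ := hU.bdd T
  have hH0 : 0 ≤ H := (abs_nonneg _).trans (hH 0 ⟨le_rfl, hT0⟩ 0 0)
  obtain ⟨a, ha0, ha1, ha2⟩ := exists_rate hκ0 (H := H + |M| + |c| * T) (by positivity)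
  obtain ⟨χ₁, χ₂, B, hχ⟩ := exists_bumpPair N
  have hB := hχ.B_nonneg
  have hnm := nearMass_nonneg hN hs hg 1
  have hfm := farMass_nonneg hN hs hg 1
  set b := t₁ + 1 / 2 with hb
  obtain ⟨δ, hδ0, hδκ, hδ⟩ := exists_small (κ := min (κ / 2) 1) (c := a * Real.exp (a * (0 - b)))
    (Q := B * nearMass N s g 1 + farMass N s g 1 + η * (|a₀| * B + (1 + B)))
    (by positivity) (by positivity) (by positivity)
  have hδ1 : δ < 1 := hδκ.trans_le (min_le_right _ _)
  replace hδκ : δ < κ / 2 := hδκ.trans_le (min_le_left _ _)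
  set F : ℝ × EN N × ℝ → ℝ := fun q =>
    M - U q.1 q.2.1 q.2.2 - (-c * q.1 + Real.exp (a * (q.1 - b))) with hF
  set D : Set (ℝ × EN N × ℝ) := Icc 0 T ×ˢ univ with hD
  have hFle : ∀ q ∈ D, F q ≤ H + |M| + |c| * T - Real.exp (a * (q.1 - b)) := by
    rintro q ⟨hq, -⟩
    have h1 := (abs_le.1 (hH q.1 hq q.2.1 q.2.2)).1
    have h2 := le_abs_self M
    have h3 : c * q.1 ≤ |c| * T := by
      calc c * q.1 ≤ |c * q.1| := le_abs_self _
        _ = |c| * q.1 := by rw [abs_mul, abs_of_nonneg hq.1]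
        _ ≤ |c| * T := by gcongr; exact hq.2
    simp only [hF]; linarith
  obtain ⟨e, ⟨t, y, yn⟩, hx, hmax, hnear⟩ := exists_max_bump (X := ℝ × EN N × ℝ) (E := EN N × ℝ)
    (D := D) (isClosed_Icc.prod isClosed_univ) ⟨(0, 0, 0), ⟨le_rfl, hT0⟩, trivial⟩ (F := F)
    ((continuousOn_const.sub (hU.cont.mono (prod_mono Icc_subset_Ici_self le_rfl))).sub
      (Continuous.continuousOn (by fun_prop)))
    (by
      refine ⟨H + |M| + |c| * T, ?_⟩
      rintro _ ⟨q, hq, rfl⟩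
      have := hFle q hq
      linarith [Real.exp_pos (a * (q.1 - b))])
    (π := Prod.snd) continuous_snd
    (fun e c => ((isBounded_Icc 0 T).prod (isBounded_closedBall (x := e) (r := 1))).subset
      (by
        rintro q ⟨hq, -, hqe⟩
        exact ⟨hq.1, by rwa [mem_closedBall, dist_eq_norm]⟩))
    (Ξ := fun e => χ₁ e.1 * χ₂ e.2)
    (by
      have := hχ.smooth₁.continuous
      have := hχ.smooth₂.continuous
      fun_prop)
    hχ.le_one (by simpa using hχ.at_zero) hχ.supp hδ0
  have hpos : 0 < F (t, y, yn) := by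
    have h1 := hnear (t₁, y₁, yn₁) ⟨⟨ht₁, by linarith⟩, trivial⟩
    have h2 : F (t₁, y₁, yn₁) = κ - Real.exp (-(a / 2)) := by
      simp only [hF, hκ, hb]
      rw [show a * (t₁ - (t₁ + 1 / 2)) = -(a / 2) by ring]
      ring
    linarith
  have ht0 : 0 < t := by
    rcases hx.1.1.lt_or_eq with h | h
    · exact h
    · exfalso
      simp only at h
      subst h
      have := h0 y yn
      simp only [hF] at hpos
      linarith [Real.exp_pos (a * (0 - b))]
  have htT : t < T := by
    rcases hx.1.2.lt_or_eq with h | h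
    · exact h
    · exfalso
      simp only at h
      subst h
      have := hFle _ hx
      simp only at this
      rw [show a * (T - b) = a / 2 by rw [hT, hb]; ring] at this
      linarith
  obtain ⟨ω, hω, hineq⟩ := hU.sup_apply hN hs hg hχ (contDiff_weight (-c) a b).neg
    (contDiff_const (c := δ)) (hasDerivAt_weight (-c) a b t).fun_neg (hasDerivAt_const t δ)
    0 0 0 e y yn
    one_pos le_rfl (τ := min t (T - t) / 2) (by
      have : 0 < min t (T - t) := lt_min ht0 (by linarith)
      linarith) (by
      have := min_le_left t (T - t)
      linarith)
    (fun t' ht' y' yn' => by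
      have h1 := min_le_left t (T - t)
      have h2 := min_le_right t (T - t)
      have := hmax (t', y', yn') ⟨⟨by linarith [ht'.1], by linarith [ht'.2]⟩, trivial⟩
      simp only [hF, testFn, Prod.fst_sub, Prod.snd_sub] at this ⊢
      linarith)
  obtain ⟨K, hK⟩ := hU.bdd_slice ht0.le
  have hI2 := levyI2_le hN hs hg one_pos (continuous_const (y := (0:ℝ))) (hU.cont_y ht0.le yn)
    (M := 0) (by simp) (fun y => hK y yn) (x := y) (x' := y) (c := δ) (fun z => by
      have := hmax (t, y + z, yn) ⟨hx.1, trivial⟩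
      have h1 := hχ.le_one ((y, yn) - e)
      have h2 := hχ.nonneg ((y + z, yn) - e)
      simp only [hF, Prod.fst_sub, Prod.snd_sub] at this h1 h2 ⊢
      nlinarith)
  rw [levyI2_const] at hI2
  -- the maximum point nearly realises the infimum of `U t`
  have hinf : U t y yn - δ ≤ ⨅ q : EN N × ℝ, U t q.1 q.2 := by
    refine le_ciInf fun q => ?_
    have := hnear (t, q.1, q.2) ⟨hx.1, trivial⟩
    simp only [hF] at this
    linarith
  have hW' := (abs_le.1 (hA (U t y yn + ⟪p, y⟫ + yn))).2
  have hσ' := (abs_le.1 (hS t y ht0.le)).1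
  have hexp : a * Real.exp (a * (0 - b)) ≤ a * Real.exp (a * (t - b)) := by gcongr
  have hzero : 2 * (0:ℝ) * (yn - 0) + δ * ω + 1 = 1 + δ * ω := by ring
  have habs : |1 + δ * ω| ≤ 1 + δ * B := by
    calc |1 + δ * ω| ≤ |1| + |δ * ω| := abs_add_le _ _
      _ ≤ 1 + δ * B := by rw [abs_one, abs_mul, abs_of_pos hδ0]; gcongr
  have habs' : 1 - δ * B ≤ |1 + δ * ω| := by
    have := le_abs_self (1 + δ * ω)
    have h2 : δ * (-ω) ≤ δ * B := by gcongr; exact (neg_le_abs _).trans hω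
    linarith
  have hη1 : η * a₀ - δ * (η * (|a₀| * B + (1 + B))) ≤
      η * (a₀ + (⨅ q : EN N × ℝ, U t q.1 q.2) - U t y yn) * |1 + δ * ω| := by
    have h1 : η * (a₀ - δ) * |1 + δ * ω| ≤
        η * (a₀ + (⨅ q : EN N × ℝ, U t q.1 q.2) - U t y yn) * |1 + δ * ω| := by
      exact mul_le_mul_of_nonneg_right (mul_le_mul_of_nonneg_left (by linarith) hη) (abs_nonneg _)
    have h2 : -(a₀ * (|1 + δ * ω| - 1)) ≤ |a₀| * (δ * B) := by
      refine (neg_le_abs _).trans ?_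
      rw [abs_mul]
      gcongr
      rw [abs_le]; constructor <;> linarith
    have h3 : δ * |1 + δ * ω| ≤ δ * (1 + B) := by
      gcongr
      nlinarith
    linarith [mul_le_mul_of_nonneg_left h2 hη, mul_le_mul_of_nonneg_left h3 hη]
  rw [hzero] at hineq
  rw [abs_zero, abs_of_pos hδ0] at hineq
  simp only [zero_mul, zero_add, add_zero] at hineq hI2
  linarith

end Barrier

/-! ### Comparison principle -/

section Comparison

variable {N : ℕ} {s : ℝ} {g : EN N → ℝ} {W : ℝ → ℝ} {σ : ℝ → EN N → ℝ} {p : EN N}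
  {L a₀ η : ℝ} {u v : ℝ → EN N → ℝ → ℝ} {A S : ℝ}

/-- The squared distance between two space-time points `(t, y, y_{N+1})`. -/
noncomputable def sqDist (q q' : ℝ × EN N × ℝ) : ℝ :=
  ‖q.2.1 - q'.2.1‖ ^ 2 + (q.2.2 - q'.2.2) ^ 2 + (q.1 - q'.1) ^ 2

lemma sqDist_nonneg (q q' : ℝ × EN N × ℝ) : 0 ≤ sqDist q q' := by unfold sqDist; positivity

/-- Discounted doubling-of-variables function, with penalisation parameter `β`. -/
noncomputable def dblFn (u v : ℝ → EN N → ℝ → ℝ) (K β : ℝ)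
    (x : (ℝ × EN N × ℝ) × (ℝ × EN N × ℝ)) : ℝ :=
  Real.exp (-(2 * K * x.1.1)) *
    (u x.1.1 x.1.2.1 x.1.2.2 - v x.2.1 x.2.2.1 x.2.2.2 - β * sqDist x.1 x.2)

/-- The domain on which `dblFn` is maximised. -/
def dblDom (N : ℕ) (T : ℝ) : Set ((ℝ × EN N × ℝ) × (ℝ × EN N × ℝ)) :=
  (Icc 0 T ×ˢ univ) ×ˢ (Icc 0 (T + 1) ×ˢ univ)

lemma dblDom_closed (T : ℝ) : IsClosed (dblDom N T) :=
  (isClosed_Icc.prod isClosed_univ).prod (isClosed_Icc.prod isClosed_univ)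

lemma dblFn_continuousOn (hu : GenSol N s g W σ p L a₀ η u) (hv : GenSol N s g W σ p L a₀ η v)
    (K β T : ℝ) : ContinuousOn (dblFn u v K β) (dblDom N T) := by
  have h1 : ContinuousOn (fun x : (ℝ × EN N × ℝ) × (ℝ × EN N × ℝ) => u x.1.1 x.1.2.1 x.1.2.2)
      (dblDom N T) :=
    hu.cont.comp (f := Prod.fst) continuousOn_fst fun x hx => ⟨hx.1.1.1, trivial⟩
  have h2 : ContinuousOn (fun x : (ℝ × EN N × ℝ) × (ℝ × EN N × ℝ) => v x.2.1 x.2.2.1 x.2.2.2)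
      (dblDom N T) :=
    hv.cont.comp (f := Prod.snd) continuousOn_snd fun x hx => ⟨hx.2.1.1, trivial⟩
  refine ContinuousOn.mul (Continuous.continuousOn (by fun_prop)) ((h1.sub h2).sub ?_)
  refine Continuous.continuousOn ?_
  unfold sqDist
  fun_prop

/-- An antitone real sequence bounded below has arbitrarily small consecutive differences. -/
lemma eventually_diff_lt {θ : ℕ → ℝ} (hθ : Antitone θ) {m : ℝ} (hm : ∀ n, m ≤ θ n) {e : ℝ}
    (he : 0 < e) : ∀ᶠ n in atTop, θ n - θ (n + 1) < e := by
  have h1 := tendsto_atTop_ciInf hθ ⟨m, by rintro _ ⟨n, rfl⟩; exact hm n⟩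
  have h2 := h1.sub (h1.comp (tendsto_add_atTop_nat 1))
  rw [sub_self] at h2
  exact h2.eventually_lt_const he

/-- The scalar inequality closing the comparison argument. -/
lemma comparison_arith {K E θ d δ m pen Er EN' Q' : ℝ} (hK : 0 < K) (hθ : 0 < θ) (hE : 1 ≤ E)
    (hm : E * (θ - δ) ≤ m) (hδ : δ ≤ θ / 2) (hpen : pen ≤ E * (2 * (d + δ))) (hd : d < θ / 32)
    (hEr : Er ≤ K * θ / 16) (hEN : EN' ≤ K * θ / 16) (hQ' : δ * (2 * K * E) + Q' < K * θ / 16)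
    (hmain : K * m ≤ K * pen + EN' + Er + Q') : False := by
  have h1 : K * (E * (θ - δ)) ≤ K * m := by gcongr
  have h2 : K * pen ≤ K * (E * (2 * (d + δ))) := by gcongr
  have h3 : K * (E * (θ / 2)) ≤ K * (E * (θ - δ)) := by gcongr; linarith
  have h4 : K * (E * (2 * d)) ≤ K * (E * (2 * (θ / 32))) := by gcongr
  have h5 : K * θ * 1 ≤ K * θ * E := by gcongr
  have h6 : 0 < K * θ := by positivity
  linarith

lemma exp_neg_mul_le_iff {a X Y : ℝ} : Real.exp (-a) * X ≤ Y ↔ X ≤ Real.exp a * Y := by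
  rw [Real.exp_neg, inv_mul_le_iff₀ (Real.exp_pos a)]

variable {χ₁ : EN N → ℝ} {χ₂ : ℝ → ℝ} {B : ℝ}

set_option maxHeartbeats 1000000 in
/-- The inequality obtained by subtracting the sub- and supersolution inequalities at an interior
maximum of the doubled function perturbed by a bump of height `δ`. -/
lemma doubling_ineq (hN : 1 ≤ N) (hs : s ∈ Ioo (0:ℝ) 1) (hg : H1 N g) (hη : 0 ≤ η)
    {K Kσ : ℝ} (hK1 : 1 ≤ K) (hK : ∀ a b, |deriv W a - deriv W b| ≤ K * |a - b|) (hKσ0 : 0 ≤ Kσ)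
    (hKσ : ∀ t t' x x', |σ t x - σ t' x'| ≤ Kσ * (|t - t'| + ‖x - x'‖))
    (hu : GenSol N s g W σ p L a₀ η u) (hv : GenSol N s g W σ p L a₀ η v)
    (hχ : IsBumpPair N χ₁ χ₂ B) {β δ T H R r : ℝ} (hβ : 0 < β) (hδ : 0 < δ)
    (hHu : ∀ t ∈ Icc 0 (T + 1), ∀ y yn, |u t y yn| ≤ H)
    {t t' : ℝ} {y z : EN N} {yn zn : ℝ} {e : EN N × ℝ}
    (ht0 : 0 < t) (htT : t < T) (ht0' : 0 < t') (htT' : t' < T + 1)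
    (hr : 0 < r) (hr1 : r ≤ 1)
    (hmax : ∀ x ∈ dblDom N T,
      dblFn u v K β x + δ * (χ₁ (x.1.2 - e).1 * χ₂ (x.1.2 - e).2) ≤
      dblFn u v K β ((t, y, yn), (t', z, zn)) + δ * (χ₁ ((y, yn) - e).1 * χ₂ ((y, yn) - e).2))
    (hpos : 0 ≤ u t y yn - v t' z zn)
    (hR1 : ‖y - z‖ ≤ R) (hR2 : |yn - zn| ≤ R) (hR3 : |t - t'| ≤ R) :
    K * (u t y yn - v t' z zn - β * sqDist (t, y, yn) (t', z, zn)) ≤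
      K * (β * sqDist (t, y, yn) (t', z, zn)) + 2 * β * nearMass N s g r
      + (K * (‖p‖ + 1) + 2 * Kσ) * R
      + δ * (Real.exp (2 * K * t) * (B * nearMass N s g r + farMass N s g r + η * (2 * β * R + 1)
        + η * (|a₀| + 2 * H) * B)) := by
  have hK0 : 0 < K := by linarith
  have hB := hχ.B_nonneg
  set θ' := dblFn u v K β ((t, y, yn), (t', z, zn)) +
    δ * (χ₁ ((y, yn) - e).1 * χ₂ ((y, yn) - e).2) with hθ'
  set E := Real.exp (2 * K * t) with hE
  have hE0 : 0 < E := Real.exp_pos _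
  set m := u t y yn - v t' z zn - β * sqDist (t, y, yn) (t', z, zn) with hm
  have hmθ : E * (θ' - δ * (χ₁ ((y, yn) - e).1 * χ₂ ((y, yn) - e).2)) = m := by
    rw [hθ', add_sub_cancel_right, dblFn, hE, ← mul_assoc, ← Real.exp_add]
    simp [hm]
  have hmax' : ∀ x ∈ dblDom N T, u x.1.1 x.1.2.1 x.1.2.2 - v x.2.1 x.2.2.1 x.2.2.2
      - β * sqDist x.1 x.2 ≤
      Real.exp (2 * K * x.1.1) * (θ' - δ * (χ₁ (x.1.2 - e).1 * χ₂ (x.1.2 - e).2)) := by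
    intro x hx
    rw [← exp_neg_mul_le_iff]
    have := hmax x hx
    unfold dblFn at this
    linarith
  -- the subsolution inequality for `u`
  have hderE : HasDerivAt (fun t => Real.exp (2 * K * t)) (2 * K * E) t := by
    have : HasDerivAt (fun t => 2 * K * t) (2 * K) t := by
      simpa using (hasDerivAt_id' t).const_mul (2 * K)
    exact this.exp.congr_deriv (by rw [hE]; ring)
  have hα' : HasDerivAt (fun a => β * (a - t') ^ 2 + Real.exp (2 * K * a) * θ')
      (2 * β * (t - t') + 2 * K * E * θ') t := by
    have h1 : HasDerivAt (fun a => β * (a - t') ^ 2) (2 * β * (t - t')) t :=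
      ((((hasDerivAt_id' t).sub_const t').pow 2).const_mul β).congr_deriv (by simp; ring)
    exact h1.add (hderE.mul_const θ')
  obtain ⟨ω, hω, hsub⟩ := hu.sub_apply hN hs hg hχ
    (α := fun a => β * (a - t') ^ 2 + Real.exp (2 * K * a) * θ')
    (ρ := fun a => -δ * Real.exp (2 * K * a)) (by fun_prop) (by fun_prop) hα'
    (hderE.const_mul (-δ)) β z zn e y yn hr hr1 (τ := min t (T - t) / 2) (by
      have : 0 < min t (T - t) := lt_min ht0 (by linarith)
      linarith) (by
      have := min_le_left t (T - t)
      linarith)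
    (fun a ha y' yn' => by
      have h1 := min_le_left t (T - t)
      have h2 := min_le_right t (T - t)
      have := hmax' ((a, y', yn'), (t', z, zn)) ⟨⟨⟨by linarith [ha.1], by linarith [ha.2]⟩, trivial⟩,
        ⟨⟨ht0'.le, htT'.le⟩, trivial⟩⟩
      simp only [testFn, Prod.fst_sub, Prod.snd_sub, sqDist] at this hmθ hm ⊢
      linarith)
  -- the supersolution inequality for `v`
  have hβ' : HasDerivAt (fun a => -(β * (t - a) ^ 2)) (2 * β * (t - t')) t' :=
    ((((hasDerivAt_id' t').const_sub t).pow 2).const_mul β).fun_neg.congr_deriv (by simp; ring)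
  obtain ⟨ω', -, hsup⟩ := hv.sup_apply hN hs hg hχ
    (α := fun a => -(β * (t - a) ^ 2))
    (ρ := fun a => 0) (by fun_prop) (by fun_prop) hβ'
    (hasDerivAt_const t' 0) (-β) y yn e z zn hr hr1 (τ := min t' (T + 1 - t') / 2) (by
      have : 0 < min t' (T + 1 - t') := lt_min ht0' (by linarith)
      linarith) (by
      have := min_le_left t' (T + 1 - t')
      linarith)
    (fun a ha y' yn' => by
      have h1 := min_le_left t' (T + 1 - t')
      have h2 := min_le_right t' (T + 1 - t')
      have := hmax' ((t, y, yn), (a, y', yn')) ⟨⟨⟨ht0.le, htT.le⟩, trivial⟩,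
        ⟨⟨by linarith [ha.1], by linarith [ha.2]⟩, trivial⟩⟩
      simp only at this
      rw [hmθ, hm] at this
      simp only [testFn, sqDist] at this ⊢
      rw [norm_sub_rev y' y, norm_sub_rev z y]
      linarith)
  -- shifting both space points by the same vector leaves the penalisation unchanged
  have hshift : ∀ (w : EN N) (wn : ℝ), u t (y + w) (yn + wn) - u t y yn ≤
      v t' (z + w) (zn + wn) - v t' z zn + δ * E := by
    intro w wn
    have := hmax' ((t, y + w, yn + wn), (t', z + w, zn + wn)) ⟨⟨⟨ht0.le, htT.le⟩, trivial⟩,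
        ⟨⟨ht0'.le, htT'.le⟩, trivial⟩⟩
    have h1 := hχ.le_one ((y, yn) - e)
    have h2 := hχ.nonneg ((y + w, yn + wn) - e)
    have h3 : E * (δ * (χ₁ ((y, yn) - e).1 * χ₂ ((y, yn) - e).2)) ≤ E * (δ * 1) := by gcongr
    have h4 : 0 ≤ E * (δ * (χ₁ ((y + w, yn + wn) - e).1 * χ₂ ((y + w, yn + wn) - e).2)) := by
      positivity
    have h5 : sqDist (t, y + w, yn + wn) (t', z + w, zn + wn) = sqDist (t, y, yn) (t', z, zn) := by
      simp [sqDist]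
    simp only [h5] at this
    linarith
  obtain ⟨M₁, hM₁⟩ := hu.bdd_slice ht0.le
  obtain ⟨M₂, hM₂⟩ := hv.bdd_slice ht0'.le
  have hI2 := levyI2_le hN hs hg hr (hu.cont_y ht0.le yn) (hv.cont_y ht0'.le zn)
    (fun y => hM₁ y yn) (fun y => hM₂ y zn) (x := y) (x' := z) (c := δ * E)
    (fun w => by simpa using hshift w 0)
  have hinf : (⨅ q : EN N × ℝ, u t q.1 q.2) - u t y yn ≤
      (⨅ q : EN N × ℝ, v t' q.1 q.2) - v t' z zn + δ * E := by
    have : (⨅ q : EN N × ℝ, u t q.1 q.2) - u t y yn - δ * E + v t' z zn ≤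
        (⨅ q : EN N × ℝ, v t' q.1 q.2) := by
      refine le_ciInf fun q => ?_
      have h1 := hshift (q.1 - z) (q.2 - zn)
      have h2 := hu.iInf_le ht0.le (y + (q.1 - z)) (yn + (q.2 - zn))
      rw [add_sub_cancel, add_sub_cancel] at h1
      linarith
    linarith
  have hW' : -deriv W (u t y yn + ⟪p, y⟫ + yn) + deriv W (v t' z zn + ⟪p, z⟫ + zn) ≤
      K * (u t y yn - v t' z zn) + K * (‖p‖ + 1) * R := by
    have h1 := (neg_abs_le _).trans' (neg_le_neg (hK (u t y yn + ⟪p, y⟫ + yn)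
      (v t' z zn + ⟪p, z⟫ + zn)))
    have h2 : |u t y yn + ⟪p, y⟫ + yn - (v t' z zn + ⟪p, z⟫ + zn)| ≤
        (u t y yn - v t' z zn) + (‖p‖ + 1) * R := by
      have h3 : |⟪p, y - z⟫| ≤ ‖p‖ * R :=
        (abs_real_inner_le_norm p (y - z)).trans (by gcongr)
      rw [inner_sub_right] at h3
      have h4 := abs_le.1 h3
      have h5 := abs_le.1 hR2
      rw [abs_le]
      constructor <;> linarith
    have h6 := mul_le_mul_of_nonneg_left h2 hK0.le
    linarith
  have hσ' : σ t y - σ t' z ≤ 2 * Kσ * R := by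
    have h1 := (le_abs_self _).trans (hKσ t t' y z)
    have h2 : Kσ * (|t - t'| + ‖y - z‖) ≤ Kσ * (R + R) := by gcongr
    linarith
  -- the nonlocal Hamiltonian
  set X := a₀ + (⨅ q : EN N × ℝ, u t q.1 q.2) - u t y yn with hX
  set Y := a₀ + (⨅ q : EN N × ℝ, v t' q.1 q.2) - v t' z zn with hY
  have hXY : X ≤ Y + δ * E := by linarith
  set G := 2 * β * (yn - zn) + 1 with hG
  have hGabs : |G| ≤ 2 * β * R + 1 := by
    calc |G| ≤ |2 * β * (yn - zn)| + |1| := abs_add_le _ _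
      _ = 2 * β * |yn - zn| + 1 := by rw [abs_one, abs_mul, abs_of_pos (by positivity)]
      _ ≤ _ := by gcongr
  have hXabs : |X| ≤ |a₀| + 2 * H := by
    have htI : t ∈ Icc 0 (T + 1) := ⟨ht0.le, by linarith⟩
    have h1 := abs_le.1 (hHu t htI y yn)
    have h2 : -H ≤ ⨅ q : EN N × ℝ, u t q.1 q.2 := le_ciInf fun q => (abs_le.1 (hHu t htI _ _)).1
    have h3 := hu.iInf_le ht0.le y yn
    have h4 := neg_abs_le a₀
    have h5 := le_abs_self a₀
    rw [abs_le]
    constructor <;> linarith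
  have hHam : η * X * |2 * β * (yn - zn) + -δ * E * ω + 1| ≤ η * Y * |G| +
      δ * (E * (η * (2 * β * R + 1) + η * (|a₀| + 2 * H) * B)) := by
    have h1 : |2 * β * (yn - zn) + -δ * E * ω + 1| = |G + -(δ * E * ω)| := by
      rw [hG]; congr 1; ring
    rw [h1]
    have h2 : |(|G + -(δ * E * ω)| - |G|)| ≤ δ * E * B := by
      have h3 := abs_abs_sub_abs_le (G + -(δ * E * ω)) G
      rw [add_sub_cancel_left, abs_neg, abs_mul, abs_of_pos (by positivity : 0 < δ * E)] at h3
      exact h3.trans (by gcongr)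
    have h3 : X * (|G + -(δ * E * ω)| - |G|) ≤ (|a₀| + 2 * H) * (δ * E * B) := by
      refine (le_abs_self _).trans ?_
      rw [abs_mul]
      exact mul_le_mul hXabs h2 (abs_nonneg _) ((abs_nonneg _).trans hXabs)
    have h4 : X * |G| ≤ (Y + δ * E) * |G| := by gcongr
    have h5 : δ * E * |G| ≤ δ * E * (2 * β * R + 1) := by gcongr
    have h6 : X * |G + -(δ * E * ω)| ≤ Y * |G| + δ * E * (2 * β * R + 1)
        + (|a₀| + 2 * H) * (δ * E * B) := by linarith
    have h7 := mul_le_mul_of_nonneg_left h6 hη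
    linarith
  have hG' : 2 * -β * (zn - yn) + 0 * ω' + 1 = G := by rw [hG]; ring
  simp only [← hE] at hsub hsup
  rw [hG'] at hsup
  have hEδ : |(-δ * E)| = δ * E := by rw [neg_mul, abs_neg, abs_of_pos (by positivity)]
  rw [hEδ, abs_of_pos hβ] at hsub
  rw [abs_neg, abs_of_pos hβ] at hsup
  simp only [abs_zero, zero_mul, add_zero] at hsup
  have hm2 : 2 * K * E * θ' + -δ * (2 * K * E) * (χ₁ (y - e.1) * χ₂ (yn - e.2)) = 2 * K * m := by
    rw [← hmθ]; simp only [Prod.fst_sub, Prod.snd_sub]; ring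
  have hm3 : K * (u t y yn - v t' z zn) =
      K * m + K * (β * sqDist (t, y, yn) (t', z, zn)) := by rw [hm]; ring
  linarith

/-- Linear growth bound minus quadratic penalisation. -/
lemma lin_sub_quad_le {C β a : ℝ} (hβ : 0 < β) : C * a - β * a ^ 2 ≤ C ^ 2 / (4 * β) := by
  rw [le_div_iff₀ (by positivity)]
  nlinarith [sq_nonneg (C - 2 * β * a)]

lemma time_le_sqDist (q q' : ℝ × EN N × ℝ) : (q.1 - q'.1) ^ 2 ≤ sqDist q q' := by
  unfold sqDist
  linarith [sq_nonneg (q.2.2 - q'.2.2), sq_nonneg ‖q.2.1 - q'.2.1‖]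

/-- Points at bounded squared distance lie at bounded distance in space. -/
lemma dist_le_of_sqDist {q q' : ℝ × EN N × ℝ} {c : ℝ} (h : sqDist q q' ≤ c) :
    dist q'.2 q.2 ≤ c + 1 := by
  unfold sqDist at h
  rw [dist_comm, dist_eq_norm, Prod.norm_def]
  refine max_le ?_ ?_
  · have : ‖q.2.1 - q'.2.1‖ ≤ ‖q.2.1 - q'.2.1‖ ^ 2 + 1 := by
      nlinarith [sq_nonneg (‖q.2.1 - q'.2.1‖ - 1)]
    simp only [Prod.fst_sub]
    linarith [sq_nonneg (q.2.2 - q'.2.2), sq_nonneg (q.1 - q'.1)]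
  · have : |q.2.2 - q'.2.2| ≤ (q.2.2 - q'.2.2) ^ 2 + 1 := by
      rw [← sq_abs]
      nlinarith [sq_nonneg (|q.2.2 - q'.2.2| - 1)]
    simp only [Prod.snd_sub, Real.norm_eq_abs]
    linarith [sq_nonneg (‖q.2.1 - q'.2.1‖), sq_nonneg (q.1 - q'.1)]

set_option maxHeartbeats 4000000 in
/-- Comparison principle for ordered initial data. The functions are doubled in time and space with
penalisation `β` and discounted by `exp (-2 K t)`, `K` being the Lipschitz constant of `W'`. The
nonlocal terms, with the infimum of each solution, compare at an interior maximum because the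
discounted function is a supremum there up to `δ`. The linear barriers exclude maxima at `t = 0`
and `t = T`. The penalisation term tends to zero along a subsequence `β = 2 ^ n`, since the
corresponding suprema are monotone. -/
theorem GenSol.comparison (hN : 1 ≤ N) (hs : s ∈ Ioo (0:ℝ) 1) (hg : H1 N g) (hη : 0 ≤ η)
    (hA : ∀ v, |deriv W v| ≤ A) (hS : ∀ t x, 0 ≤ t → |σ t x| ≤ S)
    {K Kσ : ℝ} (hK1 : 1 ≤ K) (hK : ∀ a b, |deriv W a - deriv W b| ≤ K * |a - b|) (hKσ0 : 0 ≤ Kσ)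
    (hKσ : ∀ t t' x x', |σ t x - σ t' x'| ≤ Kσ * (|t - t'| + ‖x - x'‖))
    (hu : GenSol N s g W σ p L a₀ η u) (hv : GenSol N s g W σ p L a₀ η v)
    (hu0 : ∀ y yn, u 0 y yn ≤ 0) (hv0 : ∀ y yn, 0 ≤ v 0 y yn)
    {t₁ : ℝ} (ht₁ : 0 ≤ t₁) (y₁ : EN N) (yn₁ : ℝ) : u t₁ y₁ yn₁ ≤ v t₁ y₁ yn₁ := by
  by_contra hcon
  push Not at hcon
  have hK0 : 0 < K := by linarith
  -- a common linear growth rate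
  obtain ⟨C, hC0, hCu, hCv⟩ : ∃ C : ℝ, 0 < C ∧ (∀ t, 0 ≤ t → ∀ y yn, u t y yn ≤ C * t) ∧
      (∀ t, 0 ≤ t → ∀ y yn, -(C * t) ≤ v t y yn) := by
    refine ⟨|L + A + S + η * a₀| + |L - A - S + η * a₀| + 1, by positivity, fun t ht y yn => ?_,
      fun t ht y yn => ?_⟩
    · have h1 := hu.upper hN hs hg hη hA hS hu0 ht y yn
      have h2 : (L + A + S + η * a₀) * t ≤ (|L + A + S + η * a₀| + |L - A - S + η * a₀| + 1) * t := by
        refine mul_le_mul_of_nonneg_right ?_ ht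
        linarith [le_abs_self (L + A + S + η * a₀), abs_nonneg (L - A - S + η * a₀)]
      linarith
    · have h1 := hv.lower hN hs hg hη hA hS hv0 ht y yn
      have h2 : -(L - A - S + η * a₀) * t ≤
          (|L + A + S + η * a₀| + |L - A - S + η * a₀| + 1) * t := by
        refine mul_le_mul_of_nonneg_right ?_ ht
        linarith [neg_abs_le (L - A - S + η * a₀), abs_nonneg (L + A + S + η * a₀)]
      linarith
  set θ₀ := Real.exp (-(2 * K * t₁)) * (u t₁ y₁ yn₁ - v t₁ y₁ yn₁) with hθ₀
  have hθ₀0 : 0 < θ₀ := mul_pos (Real.exp_pos _) (by linarith)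
  -- a horizon beyond which the discounted difference is negligible
  obtain ⟨T, hT1, hT⟩ : ∃ T, t₁ ≤ T ∧ 2 * C * T + C ^ 2 < Real.exp (2 * K * T) * (θ₀ / 2) := by
    refine ⟨max t₁ (2 * (2 * C + C ^ 2) / θ₀), le_max_left _ _, ?_⟩
    set T := max t₁ (2 * (2 * C + C ^ 2) / θ₀) with hTd
    have hT0 : 0 ≤ T := ht₁.trans (le_max_left _ _)
    have h1 : 2 * (2 * C + C ^ 2) / θ₀ ≤ T := le_max_right _ _
    rw [div_le_iff₀ hθ₀0] at h1
    have h2 : (T + 1) ^ 2 ≤ Real.exp (2 * K * T) := by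
      calc (T + 1) ^ 2 ≤ Real.exp T ^ 2 := by gcongr; exact Real.add_one_le_exp T
        _ = Real.exp (2 * T) := by rw [← Real.exp_nat_mul]; norm_num
        _ ≤ _ := by apply Real.exp_le_exp.2; nlinarith
    calc 2 * C * T + C ^ 2 ≤ (2 * C + C ^ 2) * (T + 1) := by
          have : 0 ≤ C ^ 2 * T := by positivity
          linarith
      _ ≤ T * θ₀ / 2 * (T + 1) := by gcongr; linarith
      _ < (T + 1) ^ 2 * (θ₀ / 2) := by
          have : 0 < (T + 1) * θ₀ := by positivity
          linarith
      _ ≤ _ := by gcongr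
  have hT0 : 0 ≤ T := ht₁.trans hT1
  obtain ⟨H, hHu, hHv⟩ : ∃ H, (∀ t ∈ Icc 0 (T + 1), ∀ y yn, |u t y yn| ≤ H) ∧
      (∀ t ∈ Icc 0 (T + 1), ∀ y yn, |v t y yn| ≤ H) := by
    obtain ⟨H₁, hH₁⟩ := hu.bdd (T + 1)
    obtain ⟨H₂, hH₂⟩ := hv.bdd (T + 1)
    exact ⟨max H₁ H₂, fun t ht y yn => (hH₁ t ht y yn).trans (le_max_left _ _),
      fun t ht y yn => (hH₂ t ht y yn).trans (le_max_right _ _)⟩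
  have hH0 : 0 ≤ H := (abs_nonneg _).trans (hHu 0 ⟨le_rfl, by linarith⟩ 0 0)
  have hdiff : ∀ x ∈ dblDom N T, u x.1.1 x.1.2.1 x.1.2.2 - v x.2.1 x.2.2.1 x.2.2.2 ≤ 2 * H := by
    intro x hx
    have h1 := abs_le.1 (hHu x.1.1 ⟨hx.1.1.1, hx.1.1.2.trans (by linarith)⟩ x.1.2.1 x.1.2.2)
    have h2 := abs_le.1 (hHv x.2.1 hx.2.1 x.2.2.1 x.2.2.2)
    linarith
  have hexp1 : ∀ x ∈ dblDom N T, Real.exp (-(2 * K * x.1.1)) ≤ 1 := fun x hx => by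
    rw [Real.exp_le_one_iff]
    have := hx.1.1.1
    have : 0 ≤ 2 * K * x.1.1 := by positivity
    linarith
  have hle2H : ∀ β, 0 ≤ β → ∀ x ∈ dblDom N T, dblFn u v K β x ≤ 2 * H := by
    intro β hβ x hx
    have h1 := hdiff x hx
    have h2 : 0 ≤ β * sqDist x.1 x.2 := mul_nonneg hβ (sqDist_nonneg _ _)
    have h3 := hexp1 x hx
    have h4 := Real.exp_pos (-(2 * K * x.1.1))
    unfold dblFn
    calc _ ≤ Real.exp (-(2 * K * x.1.1)) * (2 * H) := by gcongr; linarith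
      _ ≤ 1 * (2 * H) := by gcongr
      _ = 2 * H := one_mul _
  have hx₁ : ((t₁, y₁, yn₁), (t₁, y₁, yn₁)) ∈ dblDom N T :=
    ⟨⟨⟨ht₁, hT1⟩, trivial⟩, ⟨⟨ht₁, by linarith⟩, trivial⟩⟩
  have hbdd : ∀ β, 0 ≤ β → BddAbove (dblFn u v K β '' dblDom N T) := fun β hβ =>
    ⟨2 * H, by rintro _ ⟨x, hx, rfl⟩; exact hle2H β hβ x hx⟩
  -- the suprema along the sequence of penalisation parameters `2 ^ n`
  set θ : ℕ → ℝ := fun n => sSup (dblFn u v K (2 ^ n) '' dblDom N T) with hθ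
  have hθle : ∀ n, ∀ x ∈ dblDom N T, dblFn u v K (2 ^ n) x ≤ θ n := fun n x hx =>
    le_csSup (hbdd _ (by positivity)) (mem_image_of_mem _ hx)
  have hθ₀le : ∀ n, θ₀ ≤ θ n := fun n => by
    refine le_trans (le_of_eq ?_) (hθle n _ hx₁)
    simp [dblFn, sqDist, hθ₀]
  have hanti : Antitone θ := by
    refine antitone_nat_of_succ_le fun n => csSup_le ⟨_, mem_image_of_mem _ hx₁⟩ ?_
    rintro _ ⟨x, hx, rfl⟩
    refine le_trans ?_ (hθle n x hx)
    unfold dblFn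
    have h1 := sqDist_nonneg x.1 x.2
    have h2 : (2:ℝ) ^ n ≤ 2 ^ (n + 1) := pow_le_pow_right₀ (by norm_num) (by omega)
    gcongr
  set Q := K * (‖p‖ + 1) + 2 * Kσ with hQ
  have hQ0 : 0 ≤ Q := by positivity
  set R := K * θ₀ / (16 * (Q + 1)) with hR
  have hR0 : 0 < R := by positivity
  have hpow : Tendsto (fun n : ℕ => (2:ℝ) ^ (n + 1)) atTop atTop :=
    (tendsto_pow_atTop_atTop_of_one_lt (by norm_num)).comp (tendsto_add_atTop_nat 1)
  obtain ⟨n, ⟨⟨⟨hn1, hn2⟩, hn3⟩, hn4⟩, hn5⟩ := (((((hpow.eventually_ge_atTop 1).and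
    (hpow.eventually_gt_atTop (C ^ 2 / θ₀))).and (hpow.eventually_gt_atTop (2 * H))).and
    (hpow.eventually_ge_atTop (2 * H / R ^ 2))).and
    (eventually_diff_lt hanti hθ₀le (show (0:ℝ) < θ₀ / 32 by positivity))).exists
  set β : ℝ := 2 ^ (n + 1) with hβ
  have hβ0 : 0 < β := by positivity
  have hβ2 : (2:ℝ) ^ n = β / 2 := by rw [hβ, pow_succ]; ring
  rw [div_lt_iff₀ hθ₀0] at hn2
  rw [div_le_iff₀ (by positivity)] at hn4
  have hCβ : C ^ 2 / (4 * β) < θ₀ / 4 := by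
    rw [div_lt_iff₀ (by positivity)]; linarith
  have hCβ' : C ^ 2 / (4 * β) ≤ C ^ 2 := div_le_self (by positivity) (by linarith)
  obtain ⟨r, hr0, hr1, hnm⟩ := exists_nearMass_le hN hs hg (e := K * θ₀ / 16 / (2 * β))
    (by positivity)
  obtain ⟨χ₁, χ₂, B, hχ⟩ := exists_bumpPair N
  have hB := hχ.B_nonneg
  have hnm0 := nearMass_nonneg hN hs hg r
  have hfm0 := farMass_nonneg hN hs hg r
  set Q' := B * nearMass N s g r + farMass N s g r + η * (2 * β * R + 1) + η * (|a₀| + 2 * H) * B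
    with hQ'
  have hQ'0 : 0 ≤ Q' := by positivity
  obtain ⟨δ, hδ0, hδθ, hδQ⟩ := exists_small (κ := θ₀ / 2) (c := K * θ₀ / 16)
    (Q := Real.exp (2 * K * T) * (2 * K + Q')) (by positivity) (by positivity) (by positivity)
  obtain ⟨e, ⟨⟨t, y, yn⟩, ⟨t', z, zn⟩⟩, hx, hmax, hnear⟩ := exists_max_bump (E := EN N × ℝ)
    (dblDom_closed T) ⟨_, hx₁⟩ (dblFn_continuousOn hu hv K β T) (hbdd β hβ0.le)
    (π := fun x => x.1.2) (by fun_prop)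
    (by
      intro e c
      have hb : Bornology.IsBounded
          ((Icc 0 T ×ˢ closedBall e 1) ×ˢ (Icc 0 (T + 1) ×ˢ
            closedBall e (1 + (2 * H + |c| * Real.exp (2 * K * T) + 1))) :
            Set ((ℝ × EN N × ℝ) × (ℝ × EN N × ℝ))) :=
        ((isBounded_Icc _ _).prod isBounded_closedBall).prod
          ((isBounded_Icc _ _).prod isBounded_closedBall)
      refine hb.subset ?_
      rintro x ⟨hxD, hcx, hxe⟩
      refine ⟨⟨hxD.1.1, by rwa [mem_closedBall, dist_eq_norm]⟩, ⟨hxD.2.1, ?_⟩⟩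
      have h1 : u x.1.1 x.1.2.1 x.1.2.2 - v x.2.1 x.2.2.1 x.2.2.2 - β * sqDist x.1 x.2 ≥
          -(|c| * Real.exp (2 * K * T)) := by
        have h2 : c ≤ Real.exp (-(2 * K * x.1.1)) *
          (u x.1.1 x.1.2.1 x.1.2.2 - v x.2.1 x.2.2.1 x.2.2.2 - β * sqDist x.1 x.2) := hcx
        rw [Real.exp_neg, le_inv_mul_iff₀ (Real.exp_pos _)] at h2
        have h3 : Real.exp (2 * K * x.1.1) * -|c| ≤ Real.exp (2 * K * x.1.1) * c := by
          gcongr; exact neg_abs_le c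
        have h4 : Real.exp (2 * K * x.1.1) * |c| ≤ Real.exp (2 * K * T) * |c| := by
          gcongr; exact hxD.1.1.2
        linarith
      have h5 := hdiff x hxD
      have h6 : sqDist x.1 x.2 ≤ 2 * H + |c| * Real.exp (2 * K * T) := by
        have := sqDist_nonneg x.1 x.2
        have h7 : 1 * sqDist x.1 x.2 ≤ β * sqDist x.1 x.2 := by gcongr
        linarith
      have h8 : dist x.2.2 x.1.2 ≤ 2 * H + |c| * Real.exp (2 * K * T) + 1 :=
        dist_le_of_sqDist h6
      rw [mem_closedBall]
      have h9 : dist x.1.2 e ≤ 1 := by rwa [dist_eq_norm]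
      linarith [dist_triangle x.2.2 x.1.2 e])
    (Ξ := fun e => χ₁ e.1 * χ₂ e.2)
    (by
      have := hχ.smooth₁.continuous
      have := hχ.smooth₂.continuous
      fun_prop)
    hχ.le_one (by simpa using hχ.at_zero) hχ.supp hδ0
  set Φ := dblFn u v K β ((t, y, yn), (t', z, zn)) with hΦ
  set pen := β * sqDist (t, y, yn) (t', z, zn) with hpen
  have hpen0 : 0 ≤ pen := mul_nonneg hβ0.le (sqDist_nonneg _ _)
  have hsupΦ : θ (n + 1) ≤ Φ + δ := csSup_le ⟨_, mem_image_of_mem _ hx₁⟩ (by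
    rintro _ ⟨x, hx, rfl⟩; exact hnear x hx)
  have hΦ0 : θ₀ / 2 < Φ := by linarith [hθ₀le (n + 1)]
  have htI : 0 ≤ t ∧ t ≤ T := hx.1.1
  have htI' : 0 ≤ t' ∧ t' ≤ T + 1 := hx.2.1
  set E := Real.exp (2 * K * t) with hE
  have hE1 : 1 ≤ E := by
    rw [hE, Real.one_le_exp_iff]
    have := htI.1
    positivity
  have hET : E ≤ Real.exp (2 * K * T) := by rw [hE]; gcongr; exact htI.2
  have hmΦ : u t y yn - v t' z zn - pen = E * Φ := by
    rw [hΦ, dblFn, hE, ← mul_assoc, ← Real.exp_add]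
    simp [hpen]
  have hgrow : E * Φ ≤ 2 * C * t + C ^ 2 / (4 * β) := by
    have h1 := hCu t htI.1 y yn
    have h2 := hCv t' htI'.1 z zn
    have h3 := lin_sub_quad_le (C := C) (a := t' - t) hβ0
    have h4 : β * (t' - t) ^ 2 ≤ pen := by
      have := time_le_sqDist (t, y, yn) (t', z, zn)
      rw [show (t' - t) ^ 2 = (t - t') ^ 2 by ring]
      exact mul_le_mul_of_nonneg_left this hβ0.le
    linarith
  have hΦE : Φ ≤ E * Φ := by
    have : 1 * Φ ≤ E * Φ := by gcongr; linarith
    linarith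
  have ht0 : 0 < t := by
    rcases htI.1.lt_or_eq with h | h
    · exact h
    · rw [← h] at hgrow; linarith
  have ht0' : 0 < t' := by
    rcases htI'.1.lt_or_eq with h | h
    · exact h
    · exfalso
      have h1 := hCu t htI.1 y yn
      have h2 := hCv t' htI'.1 z zn
      have h3 := lin_sub_quad_le (C := C) (a := t) hβ0
      have h4 : β * (t - t') ^ 2 ≤ pen := by
        have := time_le_sqDist (t, y, yn) (t', z, zn)
        exact mul_le_mul_of_nonneg_left this hβ0.le
      rw [← h, sub_zero] at h4
      rw [← h, mul_zero, neg_zero] at h2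
      rw [← h] at hmΦ
      linarith
  have htT : t < T := by
    rcases htI.2.lt_or_eq with h | h
    · exact h
    · exfalso
      have : E * (θ₀ / 2) ≤ E * Φ := by gcongr
      rw [hE, h] at this hgrow
      linarith
  have hpen2H : pen ≤ 2 * H := by
    have := hdiff _ hx
    simp only at this
    linarith
  have htT' : t' < T + 1 := by
    rcases htI'.2.lt_or_eq with h | h
    · exact h
    · exfalso
      have h4 : β * 1 ≤ pen := by
        have := time_le_sqDist (t, y, yn) (t', z, zn)
        refine mul_le_mul_of_nonneg_left (le_trans ?_ this) hβ0.le
        simp only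
        nlinarith
      linarith
  have hsq : sqDist (t, y, yn) (t', z, zn) ≤ R ^ 2 := by
    have : β * sqDist (t, y, yn) (t', z, zn) ≤ β * R ^ 2 := hpen2H.trans hn4
    exact le_of_mul_le_mul_left this hβ0
  unfold sqDist at hsq
  simp only at hsq
  have hR1 : ‖y - z‖ ≤ R := by
    refine (abs_le_of_sq_le_sq' ?_ hR0.le).2
    linarith [sq_nonneg (yn - zn), sq_nonneg (t - t')]
  have hR2 : |yn - zn| ≤ R := by
    refine abs_le_of_sq_le_sq ?_ hR0.le
    linarith [sq_nonneg ‖y - z‖, sq_nonneg (t - t')]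
  have hR3 : |t - t'| ≤ R := by
    refine abs_le_of_sq_le_sq ?_ hR0.le
    linarith [sq_nonneg ‖y - z‖, sq_nonneg (yn - zn)]
  have hmain := doubling_ineq hN hs hg hη hK1 hK hKσ0 hKσ hu hv hχ hβ0 hδ0 hHu ht0 htT ht0' htT'
    hr0 hr1 hmax (by linarith) hR1 hR2 hR3
  -- halving the penalisation parameter bounds the penalisation term
  have hpenΦ : Real.exp (-(2 * K * t)) * pen ≤ 2 * (θ n - θ (n + 1) + δ) := by
    have h1 := hθle n _ hx
    rw [hβ2] at h1
    have h2 : dblFn u v K (β / 2) ((t, y, yn), (t', z, zn)) =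
        Φ + Real.exp (-(2 * K * t)) * pen / 2 := by
      rw [hΦ, hpen, dblFn, dblFn]
      simp only
      ring
    linarith
  rw [exp_neg_mul_le_iff] at hpenΦ
  have hdθ : θ₀ / 32 ≤ θ (n + 1) / 32 := by linarith [hθ₀le (n + 1)]
  refine comparison_arith (K := K) (E := E) (θ := θ₀) (d := θ n - θ (n + 1)) (δ := δ)
    (m := u t y yn - v t' z zn - pen) (pen := pen) (Er := Q * R)
    (EN' := 2 * β * nearMass N s g r) (Q' := δ * (E * Q')) hK0 hθ₀0 hE1 ?_ hδθ.le hpenΦ hn5 ?_ ?_ ?_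
    (by linarith)
  · rw [hmΦ]; gcongr; linarith [hθ₀le (n + 1)]
  · rw [hR, mul_div_assoc', div_le_iff₀ (by positivity)]
    have : 0 < K * θ₀ := by positivity
    linarith
  · rw [le_div_iff₀ (by positivity)] at hnm
    linarith
  · have : δ * (E * (2 * K + Q')) ≤ δ * (Real.exp (2 * K * T) * (2 * K + Q')) := by gcongr
    linarith

end Comparison

/-! ### Periodicity and monotonicity in the additional variable -/

/-- The lattice vector of `ℝ^N` with integer coordinates `k`. -/
noncomputable def latt {N : ℕ} (k : Fin N → ℤ) : EN N :=
  (WithLp.equiv 2 (Fin N → ℝ)).symm (fun j => (k j : ℝ))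

/-- The quantitative form of the hypotheses on the data: bounds `A`, `S` and Lipschitz constants
`K`, `Kσ` for `W'` and `σ`, and integer periodicity. -/
structure CellData (N : ℕ) (s : ℝ) (g : EN N → ℝ) (W : ℝ → ℝ) (σ : ℝ → EN N → ℝ)
    (A S K Kσ : ℝ) : Prop where
  hN : 1 ≤ N
  hs : s ∈ Ioo (0:ℝ) 1
  hg : H1 N g
  hA : ∀ v, |deriv W v| ≤ A
  hS : ∀ t x, 0 ≤ t → |σ t x| ≤ S
  hK1 : 1 ≤ K
  hK : ∀ a b, |deriv W a - deriv W b| ≤ K * |a - b|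
  hKσ0 : 0 ≤ Kσ
  hKσ : ∀ t t' x x', |σ t x - σ t' x'| ≤ Kσ * (|t - t'| + ‖x - x'‖)
  perW : ∀ (j : ℤ) v, deriv W (v + j) = deriv W v
  perT : ∀ (k : ℕ) t x, σ (t + k) x = σ t x
  perX : ∀ (k : Fin N → ℤ) t x, σ t (x + latt k) = σ t x

section Periodic

variable {N : ℕ} {s : ℝ} {g : EN N → ℝ} {W : ℝ → ℝ} {σ : ℝ → EN N → ℝ} {p : EN N}
  {L a₀ η : ℝ} {u v U : ℝ → EN N → ℝ → ℝ} {A S K Kσ : ℝ}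

lemma CellData.A_nonneg (hD : CellData N s g W σ A S K Kσ) : 0 ≤ A :=
  (abs_nonneg _).trans (hD.hA 0)

lemma CellData.S_nonneg (hD : CellData N s g W σ A S K Kσ) : 0 ≤ S :=
  (abs_nonneg _).trans (hD.hS 0 0 le_rfl)

lemma CellData.compare (hD : CellData N s g W σ A S K Kσ) (hη : 0 ≤ η)
    (hu : GenSol N s g W σ p L a₀ η u) (hv : GenSol N s g W σ p L a₀ η v)
    (hu0 : ∀ y yn, u 0 y yn ≤ 0) (hv0 : ∀ y yn, 0 ≤ v 0 y yn)
    {t : ℝ} (ht : 0 ≤ t) (y : EN N) (yn : ℝ) : u t y yn ≤ v t y yn :=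
  GenSol.comparison hD.hN hD.hs hD.hg hη hD.hA hD.hS hD.hK1 hD.hK hD.hKσ0 hD.hKσ hu hv hu0 hv0 ht
    y yn

lemma GenSol.per_latt (hD : CellData N s g W σ A S K Kσ) (hη : 0 ≤ η)
    (hU : GenSol N s g W σ p L a₀ η U) (hU0 : ∀ y yn, U 0 y yn = 0) (k : Fin N → ℤ)
    {t : ℝ} (ht : 0 ≤ t) (y : EN N) (yn : ℝ) :
    U t (y + latt k) (yn - ⟪p, latt k⟫) = U t y yn := by
  have h := hU.translate 0 (latt k) (-⟪p, latt k⟫) 0 0 (hD.perT 0) (hD.perX k) (hD.perW 0)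
    (by simp)
  have h0 : ∀ (y : EN N) (yn : ℝ), U (0 + (0:ℕ)) (y + latt k) (yn + -⟪p, latt k⟫) + 0 = 0 := by
    intro y yn
    simp [hU0]
  have h1 := hD.compare hη h hU (fun y yn => (h0 y yn).le) (fun y yn => (hU0 y yn).ge) ht y yn
  have h2 := hD.compare hη hU h (fun y yn => (hU0 y yn).le) (fun y yn => (h0 y yn).ge) ht y yn
  simp only [Nat.cast_zero, add_zero, ← sub_eq_add_neg] at h1 h2
  exact le_antisymm h1 h2

lemma GenSol.per_int (hD : CellData N s g W σ A S K Kσ) (hη : 0 ≤ η)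
    (hU : GenSol N s g W σ p L a₀ η U) (hU0 : ∀ y yn, U 0 y yn = 0) (j : ℤ)
    {t : ℝ} (ht : 0 ≤ t) (y : EN N) (yn : ℝ) :
    U t y (yn + j) = U t y yn := by
  have h := hU.translate 0 0 j 0 j (hD.perT 0) (by simp) (hD.perW j) (by simp)
  have h0 : ∀ (y : EN N) (yn : ℝ), U (0 + (0:ℕ)) (y + 0) (yn + j) + 0 = 0 := by
    intro y yn
    simp [hU0]
  have h1 := hD.compare hη h hU (fun y yn => (h0 y yn).le) (fun y yn => (hU0 y yn).ge) ht y yn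
  have h2 := hD.compare hη hU h (fun y yn => (hU0 y yn).le) (fun y yn => (h0 y yn).ge) ht y yn
  simp only [Nat.cast_zero, add_zero] at h1 h2
  exact le_antisymm h1 h2

/-- `yₙ ↦ U + yₙ` is nondecreasing. -/
lemma GenSol.mono_yn (hD : CellData N s g W σ A S K Kσ) (hη : 0 ≤ η)
    (hU : GenSol N s g W σ p L a₀ η U) (hU0 : ∀ y yn, U 0 y yn = 0) {h : ℝ} (hh : 0 ≤ h)
    {t : ℝ} (ht : 0 ≤ t) (y : EN N) (yn : ℝ) :
    U t y yn ≤ U t y (yn + h) + h := by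
  have h1 := hU.translate 0 0 h h 0 (hD.perT 0) (by simp) (hD.perW 0) (by simp)
  have h2 := hD.compare hη hU h1 (fun y yn => (hU0 y yn).le) (fun y yn => by simp [hU0, hh]) ht y yn
  simpa only [Nat.cast_zero, add_zero] using h2

lemma GenSol.osc_yn (hD : CellData N s g W σ A S K Kσ) (hη : 0 ≤ η)
    (hU : GenSol N s g W σ p L a₀ η U) (hU0 : ∀ y yn, U 0 y yn = 0)
    {t : ℝ} (ht : 0 ≤ t) (y : EN N) (yn yn' : ℝ) :
    U t y yn ≤ U t y yn' + 1 := by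
  have h1 := Int.le_ceil (yn - yn')
  have h2 := Int.ceil_lt_add_one (yn - yn')
  have h3 := hU.mono_yn hD hη hU0 (h := yn' + ⌈yn - yn'⌉ - yn) (by linarith) ht y yn
  rw [add_sub_cancel, hU.per_int hD hη hU0 _ ht] at h3
  linarith

lemma exists_latt_norm_le (y c : EN N) : ∃ k : Fin N → ℤ, ‖y + latt k - c‖ ≤ √N := by
  refine ⟨fun j => -⌊y j - c j⌋, ?_⟩
  rw [EuclideanSpace.norm_eq]
  refine Real.sqrt_le_sqrt ?_
  have : ∀ j : Fin N, ‖(y + latt (fun j => -⌊y j - c j⌋) - c) j‖ ^ 2 ≤ 1 := by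
    intro j
    have h : (y + latt (fun j => -⌊y j - c j⌋) - c) j = Int.fract (y j - c j) := by
      rw [← Int.self_sub_floor]; simp [latt, -Int.self_sub_floor]; ring
    rw [h, Real.norm_eq_abs, sq_abs]
    have := Int.fract_nonneg (y j - c j)
    have := (Int.fract_lt_one (y j - c j)).le
    nlinarith
  calc _ ≤ ∑ j : Fin N, (1:ℝ) := Finset.sum_le_sum fun j _ => this j
    _ = N := by simp

/-- Every point is equivalent, modulo the periods of `U`, to one in a given bounded cell. -/
lemma GenSol.exists_repr (hD : CellData N s g W σ A S K Kσ) (hη : 0 ≤ η)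
    (hU : GenSol N s g W σ p L a₀ η U) (hU0 : ∀ y yn, U 0 y yn = 0) (c y : EN N) (yn : ℝ) :
    ∃ y' yn', ‖y' - c‖ ≤ √N ∧ yn' ∈ Icc (0:ℝ) 1 ∧ ∀ t, 0 ≤ t → U t y' yn' = U t y yn := by
  obtain ⟨k, hk⟩ := exists_latt_norm_le y c
  refine ⟨y + latt k, Int.fract (yn - ⟪p, latt k⟫), hk,
    ⟨Int.fract_nonneg _, (Int.fract_lt_one _).le⟩, fun t ht => ?_⟩
  rw [← hU.per_latt hD hη hU0 k ht y yn, ← Int.self_sub_floor, sub_eq_add_neg _ (⌊_⌋ : ℝ),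
    ← Int.cast_neg, hU.per_int hD hη hU0 _ ht]

/-- Continuity in time, uniform in space. -/
lemma GenSol.time_modulus (hD : CellData N s g W σ A S K Kσ) (hη : 0 ≤ η)
    (hU : GenSol N s g W σ p L a₀ η U) (hU0 : ∀ y yn, U 0 y yn = 0) (T : ℝ) {e : ℝ} (he : 0 < e) :
    ∃ d, 0 < d ∧ ∀ t ∈ Icc 0 T, ∀ t' ∈ Icc 0 T, |t - t'| < d →
      ∀ y yn, U t y yn ≤ U t' y yn + e := by
  have hcpt : IsCompact (Icc 0 T ×ˢ (closedBall (0 : EN N) √N ×ˢ Icc (0:ℝ) 1)) :=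
    isCompact_Icc.prod ((isCompact_closedBall _ _).prod isCompact_Icc)
  have huc := hcpt.uniformContinuousOn_of_continuous
    (hU.cont.mono (prod_mono Icc_subset_Ici_self (subset_univ _)))
  obtain ⟨d, hd0, hd⟩ := Metric.uniformContinuousOn_iff.1 huc e he
  refine ⟨d, hd0, fun t ht t' ht' htt y yn => ?_⟩
  obtain ⟨y', yn', hy', hyn', h⟩ := hU.exists_repr hD hη hU0 0 y yn
  rw [← h t ht.1, ← h t' ht'.1]
  have hy : y' ∈ closedBall (0 : EN N) √N := by simpa using hy'
  have := hd (t, y', yn') ⟨ht, hy, hyn'⟩ (t', y', yn') ⟨ht', hy, hyn'⟩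
    (by rw [Prod.dist_eq, dist_self, Real.dist_eq]; exact max_lt htt hd0)
  rw [Real.dist_eq] at this
  have := (abs_lt.1 this).2
  simp only at this
  linarith

end Periodic

/-! ### Oscillation bound -/

section Oscillation

variable {N : ℕ} {s : ℝ} {g : EN N → ℝ} {W : ℝ → ℝ} {σ : ℝ → EN N → ℝ} {p : EN N}
  {L a₀ η : ℝ} {U : ℝ → EN N → ℝ → ℝ} {A S K Kσ : ℝ}

/-- At a maximum point the nonlocal term is controlled by the mass of the function on a ball where
the kernel is bounded below. -/
lemma levyI2_le_ball (hN : 1 ≤ N) (hs : s ∈ Ioo (0:ℝ) 1) (hg : H1 N g) {κ R : ℝ}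
    (hκ : ∀ z : EN N, 1 ≤ ‖z‖ → ‖z‖ ≤ R → κ ≤ levyKernel N s g z)
    {u : EN N → ℝ} (hu : Continuous u) {M : ℝ} (hM : ∀ x, |u x| ≤ M) {x c : EN N}
    (hmax : ∀ z, u z ≤ u x) (hc1 : 2 ≤ ‖c - x‖) (hc2 : ‖c - x‖ + 1 ≤ R) :
    levyI2 N s g u 1 x ≤ κ * ∫ z in ball c 1, (u z - u x) := by
  unfold levyI2
  have hm : MeasurableSet {z : EN N | 1 < ‖z‖} := measurableSet_lt measurable_const measurable_norm
  rw [← integral_indicator hm, ← integral_indicator measurableSet_ball,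
    ← integral_add_left_eq_self ((ball c 1).indicator fun z => u z - u x) x, ← integral_const_mul]
  refine integral_mono ((levyI2_integrable hN hs hg one_pos hu hM x).integrable_indicator hm) ?_ ?_
  · have h1 : IntegrableOn (fun z => u z - u x) (ball c 1) :=
      ((hu.sub continuous_const).continuousOn.integrableOn_compact
        (isCompact_closedBall c 1)).mono_set ball_subset_closedBall
    exact ((h1.integrable_indicator measurableSet_ball).comp_add_left x).const_mul κ
  intro z
  by_cases hz : x + z ∈ ball c 1
  · have hz' : ‖c - x - z‖ < 1 := by
      rw [mem_ball, dist_comm, dist_eq_norm] at hz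
      rwa [sub_sub]
    have h1 : 1 < ‖z‖ := by
      have := norm_sub_norm_le (c - x) z
      linarith
    have h2 : ‖z‖ ≤ R := by
      have := norm_sub_norm_le z (c - x)
      rw [norm_sub_rev z (c - x)] at this
      linarith
    rw [indicator_of_mem (show z ∈ {z : EN N | 1 < ‖z‖} from h1)]
    simp only [indicator_of_mem hz]
    have h3 := hκ z h1.le h2
    have h4 := hmax (x + z)
    nlinarith
  · simp only [indicator_of_notMem hz, mul_zero]
    refine indicator_nonpos (fun z _ => ?_) z
    have := levyKernel_nonneg hN hs hg z
    have h4 := hmax (x + z)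
    nlinarith

lemma levyI2_neg (u : EN N → ℝ) (r : ℝ) (x : EN N) :
    levyI2 N s g (fun y => -u y) r x = -levyI2 N s g u r x := by
  unfold levyI2
  rw [← integral_neg]
  congr 1
  ext z
  ring

lemma le_levyI2_ball (hN : 1 ≤ N) (hs : s ∈ Ioo (0:ℝ) 1) (hg : H1 N g) {κ R : ℝ}
    (hκ : ∀ z : EN N, 1 ≤ ‖z‖ → ‖z‖ ≤ R → κ ≤ levyKernel N s g z)
    {u : EN N → ℝ} (hu : Continuous u) {M : ℝ} (hM : ∀ x, |u x| ≤ M) {x c : EN N}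
    (hmin : ∀ z, u x ≤ u z) (hc1 : 2 ≤ ‖c - x‖) (hc2 : ‖c - x‖ + 1 ≤ R) :
    κ * ∫ z in ball c 1, (u z - u x) ≤ levyI2 N s g u 1 x := by
  have h := levyI2_le_ball (u := fun y => -u y) hN hs hg hκ hu.neg (M := M) (by simpa using hM)
    (fun z => neg_le_neg (hmin z)) hc1 hc2
  rw [levyI2_neg] at h
  have h2 : ∫ z in ball c 1, (-u z - -u x) = -∫ z in ball c 1, (u z - u x) := by
    rw [← integral_neg]
    congr 1
    ext z
    ring
  rw [h2] at h
  linarith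

end Oscillation

section Oscillation

variable {N : ℕ} {s : ℝ} {g : EN N → ℝ} {W : ℝ → ℝ} {σ : ℝ → EN N → ℝ} {p : EN N}
  {L a₀ η : ℝ} {U : ℝ → EN N → ℝ → ℝ} {A S K Kσ : ℝ}

lemma GenSol.growth (hD : CellData N s g W σ A S K Kσ) (hη : 0 ≤ η)
    (hU : GenSol N s g W σ p L a₀ η U) (hU0 : ∀ y yn, U 0 y yn = 0) :
    ∃ C : ℝ, 0 < C ∧ ∀ t, 0 ≤ t → ∀ y yn, |U t y yn| ≤ C * t := by
  refine ⟨|L + A + S + η * a₀| + |L - A - S + η * a₀| + 1, by positivity, fun t ht y yn => ?_⟩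
  have h1 := hU.upper hD.hN hD.hs hD.hg hη hD.hA hD.hS (fun y yn => (hU0 y yn).le) ht y yn
  have h2 := hU.lower hD.hN hD.hs hD.hg hη hD.hA hD.hS (fun y yn => (hU0 y yn).ge) ht y yn
  have h3 : (L + A + S + η * a₀) * t ≤ (|L + A + S + η * a₀| + |L - A - S + η * a₀| + 1) * t := by
    refine mul_le_mul_of_nonneg_right ?_ ht
    linarith [le_abs_self (L + A + S + η * a₀), abs_nonneg (L - A - S + η * a₀)]
  have h4 : -(L - A - S + η * a₀) * t ≤
      (|L + A + S + η * a₀| + |L - A - S + η * a₀| + 1) * t := by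
    refine mul_le_mul_of_nonneg_right ?_ ht
    linarith [neg_abs_le (L - A - S + η * a₀), abs_nonneg (L + A + S + η * a₀)]
  rw [abs_le]
  constructor <;> linarith

/-- The oscillation inequality at an interior global maximum of
`U(t, Y) - U(t', Z) - β (t - t')² - e^{a (t - b)}`. -/
lemma osc_ineq (hD : CellData N s g W σ A S K Kσ) (hη : 0 ≤ η)
    (hU : GenSol N s g W σ p L a₀ η U) {a b β T : ℝ} (ha : 0 < a)
    {t t' : ℝ} {y z : EN N} {yn zn : ℝ}
    (ht0 : 0 < t) (htT : t < T) (ht0' : 0 < t') (htT' : t' < T + 1)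
    (hmax : ∀ τ ∈ Icc 0 T, ∀ y' yn', ∀ τ' ∈ Icc 0 (T + 1), ∀ z' zn',
      U τ y' yn' - U τ' z' zn' - β * (τ - τ') ^ 2 - Real.exp (a * (τ - b)) ≤
      U t y yn - U t' z zn - β * (t - t') ^ 2 - Real.exp (a * (t - b))) :
    0 < levyI2 N s g (fun y => U t y yn) 1 y - levyI2 N s g (fun y => U t' y zn) 1 z
      + 2 * (A + S) := by
  obtain ⟨χ₁, χ₂, B, hχ⟩ := exists_bumpPair N
  have hα' : HasDerivAt (fun τ => β * (τ - t') ^ 2 + (0 * τ + Real.exp (a * (τ - b))))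
      (2 * β * (t - t') + (0 + a * Real.exp (a * (t - b)))) t := by
    have h1 : HasDerivAt (fun τ => β * (τ - t') ^ 2) (2 * β * (t - t')) t :=
      ((((hasDerivAt_id' t).sub_const t').pow 2).const_mul β).congr_deriv (by simp; ring)
    exact h1.add (hasDerivAt_weight 0 a b t)
  obtain ⟨ω, -, hsub⟩ := hU.sub_apply hD.hN hD.hs hD.hg hχ
    (α := fun τ => β * (τ - t') ^ 2 + (0 * τ + Real.exp (a * (τ - b))))
    (ρ := fun _ => 0) (by fun_prop) (by fun_prop) hα'
    (hasDerivAt_const t 0) 0 0 0 0 y yn one_pos le_rfl (τ := min t (T - t) / 2) (by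
      have : 0 < min t (T - t) := lt_min ht0 (by linarith)
      linarith) (by
      have := min_le_left t (T - t)
      linarith)
    (fun τ hτ y' yn' => by
      have h1 := min_le_left t (T - t)
      have h2 := min_le_right t (T - t)
      have := hmax τ ⟨by linarith [hτ.1], by linarith [hτ.2]⟩ y' yn' t' ⟨ht0'.le, htT'.le⟩ z zn
      simp only [testFn]
      linarith)
  have hβ' : HasDerivAt (fun τ => -(β * (t - τ) ^ 2)) (2 * β * (t - t')) t' :=
    ((((hasDerivAt_id' t').const_sub t).pow 2).const_mul β).fun_neg.congr_deriv (by simp; ring)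
  obtain ⟨ω', -, hsup⟩ := hU.sup_apply hD.hN hD.hs hD.hg hχ
    (α := fun τ => -(β * (t - τ) ^ 2))
    (ρ := fun _ => 0) (by fun_prop) (by fun_prop) hβ'
    (hasDerivAt_const t' 0) 0 0 0 0 z zn one_pos le_rfl (τ := min t' (T + 1 - t') / 2) (by
      have : 0 < min t' (T + 1 - t') := lt_min ht0' (by linarith)
      linarith) (by
      have := min_le_left t' (T + 1 - t')
      linarith)
    (fun τ hτ z' zn' => by
      have h1 := min_le_left t' (T + 1 - t')
      have h2 := min_le_right t' (T + 1 - t')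
      have := hmax t ⟨ht0.le, htT.le⟩ y yn τ ⟨by linarith [hτ.1], by linarith [hτ.2]⟩ z' zn'
      simp only [testFn]
      linarith)
  have hinf := hU.iInf_le ht0.le y yn
  have hinf' : U t' z zn ≤ ⨅ q : EN N × ℝ, U t' q.1 q.2 := le_ciInf fun q => by
    have := hmax t ⟨ht0.le, htT.le⟩ y yn t' ⟨ht0'.le, htT'.le⟩ q.1 q.2
    linarith
  have hW₁ := (abs_le.1 (hD.hA (U t y yn + ⟪p, y⟫ + yn))).1
  have hW₂ := (abs_le.1 (hD.hA (U t' z zn + ⟪p, z⟫ + zn))).2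
  have hσ₁ := (abs_le.1 (hD.hS t y ht0.le)).2
  have hσ₂ := (abs_le.1 (hD.hS t' z ht0'.le)).1
  have h1 : η * (a₀ + (⨅ q : EN N × ℝ, U t q.1 q.2) - U t y yn) ≤ η * a₀ :=
    mul_le_mul_of_nonneg_left (by linarith) hη
  have h2 : η * a₀ ≤ η * (a₀ + (⨅ q : EN N × ℝ, U t' q.1 q.2) - U t' z zn) :=
    mul_le_mul_of_nonneg_left (by linarith) hη
  have h3 : 0 < a * Real.exp (a * (t - b)) := by positivity
  simp only [abs_zero, zero_mul, mul_zero, add_zero, zero_add, abs_one, mul_one, neg_zero]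
    at hsub hsup
  linarith

set_option maxHeartbeats 1000000 in
/-- Oscillation bound in space, independent of `η`, `L`, `a₀`, `p` and of time. At a maximum point
of `U(t, Y) - U(t', Z)` with `t` close to `t'`, periodicity allows `Y` and `Z` to be taken with
`|y - z| ≤ √N`. Both nonlocal terms then see a common unit ball on which the kernels are at least
`κ`, and there `U(t, x, y_{N+1}) - U(t', x, z_{N+1})` is at most `1` up to a small error, by
`GenSol.osc_yn`. If the oscillation exceeded `Q`, the nonlocal terms would contribute less than
`-2 (A + S)`, contradicting `osc_ineq`. The `η`-terms have the right sign, because `Z` is a global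
minimum point of `U(t', ·)`. -/
theorem GenSol.osc (hD : CellData N s g W σ A S K Kσ) (hη : 0 ≤ η)
    (hU : GenSol N s g W σ p L a₀ η U) (hU0 : ∀ y yn, U 0 y yn = 0) {κ : ℝ} (hκ0 : 0 < κ)
    (hκ : ∀ z : EN N, 1 ≤ ‖z‖ → ‖z‖ ≤ 2 * √N + 4 → κ ≤ levyKernel N s g z)
    {t₁ : ℝ} (ht₁ : 0 ≤ t₁) (y₁ : EN N) (yn₁ : ℝ) (z₁ : EN N) (zn₁ : ℝ) :
    U t₁ y₁ yn₁ ≤ U t₁ z₁ zn₁ +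
      (1 + 2 * (A + S) / (κ * volume.real (ball (0 : EN N) 1))) := by
  by_contra hcon
  push Not at hcon
  set V := volume.real (ball (0 : EN N) 1) with hV
  have hV0 : 0 < V := by
    rw [hV, measureReal_def]
    exact ENNReal.toReal_pos (measure_ball_pos _ _ one_pos).ne' measure_ball_lt_top.ne
  have hAS : 0 ≤ A + S := add_nonneg hD.A_nonneg hD.S_nonneg
  set Q := 1 + 2 * (A + S) / (κ * V) with hQ
  have hQ0 : 0 ≤ Q := by positivity
  obtain ⟨ν, hν0, hν⟩ : ∃ ν, 0 < ν ∧ U t₁ y₁ yn₁ - U t₁ z₁ zn₁ = Q + 2 * ν :=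
    ⟨(U t₁ y₁ yn₁ - U t₁ z₁ zn₁ - Q) / 2, by linarith, by ring⟩
  set T := t₁ + 1 with hT
  have hT0 : 0 ≤ T := by positivity
  obtain ⟨H, hH⟩ := hU.bdd (T + 1)
  have hH0 : 0 ≤ H := (abs_nonneg _).trans (hH 0 ⟨le_rfl, by linarith⟩ 0 0)
  obtain ⟨C, hC0, hC⟩ := hU.growth hD hη hU0
  obtain ⟨a, ha0, ha1, ha2⟩ := exists_rate hν0 (H := 2 * H) (by positivity)
  set b := t₁ + 1 / 2 with hb
  obtain ⟨d, hd0, hd⟩ := hU.time_modulus hD hη hU0 (T + 1) (e := ν / 2) (by positivity)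
  obtain ⟨β, hβ1, hβ2, hβ3⟩ : ∃ β : ℝ, 2 * H < β ∧ C ^ 2 < 4 * β * ν ∧ 2 * H < β * d ^ 2 := by
    have h1 := (((eventually_gt_atTop (2 * H)).and (eventually_gt_atTop (C ^ 2 / (4 * ν)))).and
      (eventually_gt_atTop (2 * H / d ^ 2))).exists
    obtain ⟨β, ⟨h1, h2⟩, h3⟩ := h1
    rw [div_lt_iff₀ (by positivity)] at h2 h3
    exact ⟨β, h1, by linarith, h3⟩
  have hβ0 : 0 < β := by linarith
  have hCβ : C ^ 2 / (4 * β) < ν := by rw [div_lt_iff₀ (by positivity)]; linarith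
  -- maximise over the compact fundamental cell
  set Ψ : (ℝ × EN N × ℝ) × (ℝ × EN N × ℝ) → ℝ := fun x =>
    U x.1.1 x.1.2.1 x.1.2.2 - U x.2.1 x.2.2.1 x.2.2.2 - β * (x.1.1 - x.2.1) ^ 2
      - Real.exp (a * (x.1.1 - b)) with hΨ
  set cell : Set (EN N × ℝ) := closedBall 0 √N ×ˢ Icc 0 1 with hcell
  have hcellc : IsCompact cell := (isCompact_closedBall _ _).prod isCompact_Icc
  have h00 : ((0 : EN N), (0 : ℝ)) ∈ cell := ⟨by simp, by simp⟩
  obtain ⟨⟨⟨t, y, yn⟩, ⟨t', z₀, zn₀⟩⟩, hx, hxmax⟩ :=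
    ((isCompact_Icc.prod hcellc).prod (isCompact_Icc.prod hcellc) :
      IsCompact ((Icc 0 T ×ˢ cell) ×ˢ (Icc 0 (T + 1) ×ˢ cell))).exists_isMaxOn
      ⟨((0, 0, 0), (0, 0, 0)), ⟨⟨⟨le_rfl, hT0⟩, h00⟩, ⟨⟨le_rfl, by linarith⟩, h00⟩⟩⟩ (f := Ψ) (by
        have h1 : ContinuousOn (fun x : (ℝ × EN N × ℝ) × (ℝ × EN N × ℝ) =>
            U x.1.1 x.1.2.1 x.1.2.2) ((Icc 0 T ×ˢ cell) ×ˢ (Icc 0 (T + 1) ×ˢ cell)) :=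
          hU.cont.comp (f := Prod.fst) continuousOn_fst fun x hx => ⟨hx.1.1.1, trivial⟩
        have h2 : ContinuousOn (fun x : (ℝ × EN N × ℝ) × (ℝ × EN N × ℝ) =>
            U x.2.1 x.2.2.1 x.2.2.2) ((Icc 0 T ×ˢ cell) ×ˢ (Icc 0 (T + 1) ×ˢ cell)) :=
          hU.cont.comp (f := Prod.snd) continuousOn_snd fun x hx => ⟨hx.2.1.1, trivial⟩
        exact ((h1.sub h2).sub (Continuous.continuousOn (by fun_prop))).sub
          (Continuous.continuousOn (by fun_prop)))
  have htI : 0 ≤ t ∧ t ≤ T := hx.1.1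
  have htI' : 0 ≤ t' ∧ t' ≤ T + 1 := hx.2.1
  -- move the minimum point close to the maximum point
  obtain ⟨z, zn, hz, -, hzU⟩ := hU.exists_repr hD hη hU0 y z₀ zn₀
  have hmax : ∀ τ ∈ Icc 0 T, ∀ y' yn', ∀ τ' ∈ Icc 0 (T + 1), ∀ z' zn',
      U τ y' yn' - U τ' z' zn' - β * (τ - τ') ^ 2 - Real.exp (a * (τ - b)) ≤
      U t y yn - U t' z zn - β * (t - t') ^ 2 - Real.exp (a * (t - b)) := by
    intro τ hτ y' yn' τ' hτ' z' zn'
    obtain ⟨y₂, yn₂, hy₂, hyn₂, hyU⟩ := hU.exists_repr hD hη hU0 0 y' yn'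
    obtain ⟨z₂, zn₂, hz₂, hzn₂, hzU₂⟩ := hU.exists_repr hD hη hU0 0 z' zn'
    rw [← hyU τ hτ.1, ← hzU₂ τ' hτ'.1, hzU t' htI'.1]
    exact hxmax (show ((τ, y₂, yn₂), (τ', z₂, zn₂)) ∈ _ from
      ⟨⟨hτ, by simpa using hy₂, hyn₂⟩, ⟨hτ', by simpa using hz₂, hzn₂⟩⟩)
  have hval : Q + ν ≤ U t y yn - U t' z zn - β * (t - t') ^ 2 - Real.exp (a * (t - b)) := by
    have := hmax t₁ ⟨ht₁, by linarith⟩ y₁ yn₁ t₁ ⟨ht₁, by linarith⟩ z₁ zn₁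
    rw [show a * (t₁ - b) = -(a / 2) by rw [hb]; ring, sub_self] at this
    linarith
  have hexp := Real.exp_pos (a * (t - b))
  have hUt := abs_le.1 (hH t ⟨htI.1, by linarith [htI.2]⟩ y yn)
  have hUt' := abs_le.1 (hH t' htI' z zn)
  have hsq0 : 0 ≤ β * (t - t') ^ 2 := by positivity
  have ht0 : 0 < t := by
    rcases htI.1.lt_or_eq with h | h
    · exact h
    · exfalso
      have h1 := (abs_le.1 (hC t htI.1 y yn)).2
      have h2 := (abs_le.1 (hC t' htI'.1 z zn)).1
      have h3 := lin_sub_quad_le (C := C) (a := t') hβ0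
      rw [← h] at h1 hval
      rw [zero_sub, neg_sq] at hval
      rw [← h] at hexp
      linarith
  have ht0' : 0 < t' := by
    rcases htI'.1.lt_or_eq with h | h
    · exact h
    · exfalso
      have h1 := (abs_le.1 (hC t htI.1 y yn)).2
      have h2 := (abs_le.1 (hC t' htI'.1 z zn)).1
      have h3 := lin_sub_quad_le (C := C) (a := t) hβ0
      rw [← h] at h2 hval
      rw [sub_zero] at hval
      linarith
  have htT : t < T := by
    rcases htI.2.lt_or_eq with h | h
    · exact h
    · exfalso
      have h1 : Real.exp (a * (t - b)) = Real.exp (a / 2) := by rw [h, hT, hb]; congr 1; ring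
      linarith
  have htT' : t' < T + 1 := by
    rcases htI'.2.lt_or_eq with h | h
    · exact h
    · exfalso
      have h1 : 1 ≤ (t - t') ^ 2 := by nlinarith
      have h2 : β * 1 ≤ β * (t - t') ^ 2 := by gcongr
      linarith
  have htt : |t - t'| < d := by
    refine abs_lt_of_sq_lt_sq ?_ hd0.le
    have : β * (t - t') ^ 2 < β * d ^ 2 := by linarith
    exact lt_of_mul_lt_mul_left this hβ0.le
  have hineq := osc_ineq hD hη hU ha0 ht0 htT ht0' htT' hmax
  -- a unit ball at moderate distance of both `y` and `z`
  obtain ⟨w, hw⟩ : ∃ w : EN N, ‖w‖ = √N + 3 := by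
    have h : 0 ≤ √(N : ℝ) + 3 := by positivity
    exact ⟨(√(N : ℝ) + 3) • EuclideanSpace.single ⟨0, hD.hN⟩ (1 : ℝ), by
      simp [norm_smul, abs_of_nonneg h]⟩
  have hc1 : ‖y + w - y‖ = √N + 3 := by rw [add_sub_cancel_left, hw]
  have hc2 : 2 ≤ ‖y + w - z‖ := by
    have h1 := norm_sub_norm_le w (z - y)
    rw [show w - (z - y) = y + w - z by abel] at h1
    linarith
  have hc3 : ‖y + w - z‖ + 1 ≤ 2 * √N + 4 := by
    have h1 := norm_sub_le w (z - y)
    rw [show w - (z - y) = y + w - z by abel] at h1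
    linarith
  have hsN : 0 ≤ √(N : ℝ) := Real.sqrt_nonneg _
  have hI1 := levyI2_le_ball hD.hN hD.hs hD.hg hκ (hU.cont_y ht0.le yn)
    (fun x => hH t ⟨htI.1, by linarith⟩ x yn) (x := y) (c := y + w)
    (fun x => by linarith [hmax t htI x yn t' htI' z zn]) (by linarith) (by linarith)
  have hI2 := le_levyI2_ball hD.hN hD.hs hD.hg hκ (hU.cont_y ht0'.le zn)
    (fun x => hH t' htI' x zn) (x := z) (c := y + w)
    (fun x => by linarith [hmax t htI y yn t' htI' x zn]) hc2 hc3
  have hInt : ∀ {f : EN N → ℝ}, Continuous f → IntegrableOn f (ball (y + w) 1) := fun hf =>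
    (hf.continuousOn.integrableOn_compact (isCompact_closedBall _ 1)).mono_set
      ball_subset_closedBall
  have hI3 : (∫ x in ball (y + w) 1, (U t x yn - U t y yn)) -
      (∫ x in ball (y + w) 1, (U t' x zn - U t' z zn)) ≤ V * -(2 * (A + S) / (κ * V) + ν / 2) := by
    have e1 : IntegrableOn (fun x => U t x yn - U t y yn) (ball (y + w) 1) :=
      hInt ((hU.cont_y ht0.le yn).sub continuous_const)
    have e2 : IntegrableOn (fun x => U t' x zn - U t' z zn) (ball (y + w) 1) :=
      hInt ((hU.cont_y ht0'.le zn).sub continuous_const)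
    rw [← integral_sub e1 e2]
    have h1 : V * -(2 * (A + S) / (κ * V) + ν / 2) =
        ∫ x in ball (y + w) 1, -(2 * (A + S) / (κ * V) + ν / 2) := by
      have h2 : volume.real (ball (y + w) 1) = V := by
        rw [hV, measureReal_def, measureReal_def, Measure.addHaar_ball_center]
      rw [setIntegral_const, smul_eq_mul, h2]
    rw [h1]
    refine setIntegral_mono (e1.sub e2) (hInt continuous_const) fun x => ?_
    have h2 := hU.osc_yn hD hη hU0 ht0.le x yn zn
    have h3 := hd t ⟨htI.1, by linarith⟩ t' htI' htt x zn
    simp only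
    linarith
  have hI4 := mul_le_mul_of_nonneg_left hI3 hκ0.le
  have h5 : κ * (V * -(2 * (A + S) / (κ * V) + ν / 2)) = -(2 * (A + S)) - κ * V * ν / 2 := by
    field_simp
    ring
  have h6 : 0 < κ * V * ν := by positivity
  linarith

end Oscillation

/-! ### The ergodic constant -/

/-- A sequence of linear growth that is additive up to an error `D` stays at distance `D` of a
linear sequence; the slope is given by Fekete's lemma for `b + D` and `D - b`. -/
lemma exists_slope {b : ℕ → ℝ} {D c₁ c₂ : ℝ} (hb : ∀ j k, |b (j + k) - b j - b k| ≤ D)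
    (h1 : ∀ k : ℕ, c₁ * k ≤ b k) (h2 : ∀ k : ℕ, b k ≤ c₂ * k) :
    ∃ lam, c₁ ≤ lam ∧ lam ≤ c₂ ∧ ∀ k : ℕ, |b k - lam * k| ≤ D := by
  have hD : 0 ≤ D := (abs_nonneg _).trans (hb 0 0)
  have hu : Subadditive (fun n => b n + D) := fun j k => by
    have := (abs_le.1 (hb j k)).2
    simp only
    linarith
  have hv : Subadditive (fun n => -b n + D) := fun j k => by
    have := (abs_le.1 (hb j k)).1
    simp only
    linarith
  have hub : BddBelow (range fun n : ℕ => (b n + D) / n) := by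
    refine ⟨min c₁ 0, ?_⟩
    rintro _ ⟨n, rfl⟩
    rcases Nat.eq_zero_or_pos n with rfl | hn
    · simp
    · have hn' : (0:ℝ) < n := by exact_mod_cast hn
      refine (min_le_left _ _).trans ?_
      rw [le_div_iff₀ hn']
      linarith [h1 n]
  have hvb : BddBelow (range fun n : ℕ => (-b n + D) / n) := by
    refine ⟨min (-c₂) 0, ?_⟩
    rintro _ ⟨n, rfl⟩
    rcases Nat.eq_zero_or_pos n with rfl | hn
    · simp
    · have hn' : (0:ℝ) < n := by exact_mod_cast hn
      refine (min_le_left _ _).trans ?_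
      rw [le_div_iff₀ hn']
      linarith [h2 n]
  have hDn : Tendsto (fun n : ℕ => D / (n:ℝ)) atTop (nhds 0) := tendsto_const_div_atTop_nhds_zero_nat D
  have hlu : Tendsto (fun n : ℕ => b n / n) atTop (nhds hu.lim) := by
    have := (hu.tendsto_lim hub).sub hDn
    rw [sub_zero] at this
    refine this.congr fun n => ?_
    ring
  have hlv : Tendsto (fun n : ℕ => b n / n) atTop (nhds (-hv.lim)) := by
    have := ((hv.tendsto_lim hvb).sub hDn).neg
    rw [sub_zero] at this
    refine this.congr fun n => ?_
    ring
  have heq := tendsto_nhds_unique hlu hlv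
  refine ⟨hu.lim, ?_, ?_, fun k => ?_⟩
  · refine ge_of_tendsto hlu ?_
    filter_upwards [eventually_gt_atTop 0] with n hn
    rw [le_div_iff₀ (by exact_mod_cast hn)]
    exact h1 n
  · refine le_of_tendsto hlu ?_
    filter_upwards [eventually_gt_atTop 0] with n hn
    rw [div_le_iff₀ (by exact_mod_cast hn)]
    exact h2 n
  · rcases Nat.eq_zero_or_pos k with rfl | hk
    · have := hb 0 0
      rw [abs_le] at this ⊢
      simp at this ⊢
      constructor <;> linarith
    · have hk' : (0:ℝ) < k := by exact_mod_cast hk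
      have h3 := hu.lim_le_div hub hk.ne'
      have h4 := hv.lim_le_div hvb hk.ne'
      rw [le_div_iff₀ hk'] at h3 h4
      rw [heq] at h3
      rw [abs_le, heq]
      constructor <;> linarith

section Ergodic

variable {N : ℕ} {s : ℝ} {g : EN N → ℝ} {W : ℝ → ℝ} {σ : ℝ → EN N → ℝ} {p : EN N}
  {L a₀ η : ℝ} {U : ℝ → EN N → ℝ → ℝ} {A S K Kσ : ℝ}

/-- The time shift by an integer, together with the subtraction of an integer. -/
lemma GenSol.shift (hD : CellData N s g W σ A S K Kσ) (hU : GenSol N s g W σ p L a₀ η U)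
    (k : ℕ) (c : ℤ) : GenSol N s g W σ p L a₀ η (fun t y yn => U (t + k) y yn - c) := by
  have h := hU.translate k 0 0 (-c) c (hD.perT k) (by simp) (hD.perW c) (by simp)
  simpa only [add_zero, ← sub_eq_add_neg] using h

/-- If the oscillation of `U(t, ·)` is at most `Q` at all times, the values `U(k, 0)` at integer
times are additive up to `Q + 1`. -/
lemma GenSol.almost_additive (hD : CellData N s g W σ A S K Kσ) (hη : 0 ≤ η)
    (hU : GenSol N s g W σ p L a₀ η U) (hU0 : ∀ y yn, U 0 y yn = 0) {Q : ℝ}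
    (hQ : ∀ t, 0 ≤ t → ∀ y yn z zn, U t y yn ≤ U t z zn + Q) (j k : ℕ) :
    |U ((j + k : ℕ) : ℝ) 0 0 - U j 0 0 - U k 0 0| ≤ Q + 1 := by
  have hj : (0:ℝ) ≤ j := j.cast_nonneg
  have hk : (0:ℝ) ≤ k := k.cast_nonneg
  have e : ((j + k : ℕ) : ℝ) = k + j := by push_cast; ring
  rw [e, abs_le]
  have h1 := hD.compare hη (hU.shift hD j ⌈U j 0 0 + Q⌉) hU (fun y yn => by
    have h2 := hQ j hj y yn 0 0
    have h3 := Int.le_ceil (U j 0 0 + Q)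
    rw [zero_add]
    linarith) (fun y yn => (hU0 y yn).ge) hk 0 0
  have h2 := hD.compare hη hU (hU.shift hD j ⌊U j 0 0 - Q⌋) (fun y yn => (hU0 y yn).le)
    (fun y yn => by
    have h2 := hQ j hj 0 0 y yn
    have h3 := Int.floor_le (U j 0 0 - Q)
    rw [zero_add]
    linarith) hk 0 0
  have h3 := Int.ceil_lt_add_one (U j 0 0 + Q)
  have h4 := Int.lt_floor_add_one (U j 0 0 - Q)
  constructor <;> linarith

/-- Existence of the slope, its bounds, and the distance to it, given a bound `Q` on the oscillation.
Integer times are handled by `exists_slope`, the remaining times by the linear barriers issued from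
the last integer time. -/
theorem GenSol.ergodic (hD : CellData N s g W σ A S K Kσ) (hη : 0 ≤ η)
    (hU : GenSol N s g W σ p L a₀ η U) (hU0 : ∀ y yn, U 0 y yn = 0) {Q : ℝ}
    (hQ : ∀ t, 0 ≤ t → ∀ y yn z zn, U t y yn ≤ U t z zn + Q) :
    ∃ lam, L - A - S + η * a₀ ≤ lam ∧ lam ≤ L + A + S + η * a₀ ∧
      ∀ τ, 0 ≤ τ → ∀ y yn, |U τ y yn - lam * τ| ≤ 2 * Q + 1 + 2 * (A + S) := by
  obtain ⟨lam, hl1, hl2, hl⟩ := exists_slope (b := fun k : ℕ => U k 0 0)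
    (hU.almost_additive hD hη hU0 hQ)
    (fun k => by
      have := hU.lower hD.hN hD.hs hD.hg hη hD.hA hD.hS (fun y yn => (hU0 y yn).ge)
        (k.cast_nonneg : (0:ℝ) ≤ k) 0 0
      rwa [zero_add] at this)
    (fun k => by
      have := hU.upper hD.hN hD.hs hD.hg hη hD.hA hD.hS (fun y yn => (hU0 y yn).le)
        (k.cast_nonneg : (0:ℝ) ≤ k) 0 0
      rwa [zero_add] at this)
  refine ⟨lam, hl1, hl2, fun τ hτ y yn => ?_⟩
  set k := ⌊τ⌋₊ with hk
  have hk0 : (0:ℝ) ≤ k := k.cast_nonneg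
  have hr0 : 0 ≤ τ - k := by linarith [Nat.floor_le hτ]
  have hr1 : τ - k ≤ 1 := by linarith [Nat.lt_floor_add_one τ]
  have hV := hU.shift hD k 0
  have h1 := hV.upper hD.hN hD.hs hD.hg hη hD.hA hD.hS (M := U k 0 0 + Q) (fun y yn => by
    simpa using hQ k hk0 y yn 0 0) hr0 y yn
  have h2 := hV.lower hD.hN hD.hs hD.hg hη hD.hA hD.hS (M := U k 0 0 - Q) (fun y yn => by
    simpa using hQ k hk0 0 0 y yn) hr0 y yn
  simp only [sub_add_cancel, Int.cast_zero, sub_zero] at h1 h2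
  have h3 := abs_le.1 (hl k)
  have h4 : (L + A + S + η * a₀ - lam) * (τ - k) ≤ 2 * (A + S) := by
    have := mul_le_mul_of_nonneg_left hr1 (sub_nonneg.2 hl2)
    linarith
  have h5 : (lam - (L - A - S + η * a₀)) * (τ - k) ≤ 2 * (A + S) := by
    have := mul_le_mul_of_nonneg_left hr1 (sub_nonneg.2 hl1)
    linarith
  rw [abs_le]
  constructor <;> linarith [h3.1, h3.2]

/-- A solution of the initial value problem is a solution in the sense of `GenSol`. -/
lemma IsSolNp1.genSol (hU : IsSolNp1 N s g
      (fun τ y yn v _ dyn I infv =>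
        L + I - deriv W (v + ⟪p, y⟫ + yn) + σ τ y + η * (a₀ + infv - v) * |dyn + 1|)
      (fun _ _ => 0) U) :
    GenSol N s g W σ p L a₀ η U ∧ ∀ y yn, U 0 y yn = 0 := by
  obtain ⟨hc, ⟨-, hb, h0, hsub⟩, ⟨-, -, h0', hsup⟩⟩ := hU
  have hU0 : ∀ y yn, U 0 y yn = 0 := fun y yn => le_antisymm (h0 y yn) (h0' y yn)
  refine ⟨⟨hc, fun T => ?_, ?_, ?_⟩, hU0⟩
  · obtain ⟨M, hM⟩ := hb (max T 1) (by positivity)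
    refine ⟨max M 0, fun t ht y yn => ?_⟩
    rcases ht.1.eq_or_lt with h | h
    · rw [← h, hU0, abs_zero]
      exact le_max_right _ _
    · exact (hM t ⟨h, ht.2.trans (le_max_left _ _)⟩ y yn).trans (le_max_left _ _)
  · intro t₀ y₀ yn₀ ht₀ φ hφ τ r hτ hτt hr hmax
    exact sub_nonpos.1 (hsub t₀ y₀ yn₀ ht₀ φ hφ τ r hτ hτt hr hmax)
  · intro t₀ y₀ yn₀ ht₀ φ hφ τ r hτ hτt hr hmax
    exact sub_nonneg.1 (hsup t₀ y₀ yn₀ ht₀ φ hφ τ r hτ hτt hr hmax)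

/-- The structural hypotheses in quantitative form. By periodicity and Lipschitz continuity the
suprema `‖W'‖_∞` and `‖σ‖_∞` are finite, so that they are genuine bounds. -/
lemma exists_cellData (hN : 1 ≤ N) (hs : s ∈ Ioo (0:ℝ) 1) (hg : H1 N g) (hW : H2 W)
    (hσ : H3 N σ) : ∃ K Kσ, CellData N s g W σ (supW' W) (supSigma N σ) K Kσ := by
  obtain ⟨-, ⟨K, hK⟩, hWper⟩ := hW
  obtain ⟨⟨Kσ, hKσ⟩, hσt, hσx⟩ := hσ
  have hd1 : Function.Periodic (deriv W) 1 := fun v => by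
    have : (fun v => W (v + 1)) = W := funext hWper
    rw [← deriv_comp_add_const, this]
  have hdj : ∀ (j : ℤ) v, deriv W (v + j) = deriv W v := fun j v => by
    simpa using (hd1.int_mul j) v
  have hlip : ∀ t t' x x', |σ t x - σ t' x'| ≤ Kσ * (|t - t'| + ‖x - x'‖) := by
    intro t t' x x'
    have h := hKσ.dist_le_mul (t, x) (t', x')
    rw [Real.dist_eq, Prod.dist_eq] at h
    refine h.trans (mul_le_mul_of_nonneg_left ?_ Kσ.2)
    simp only [dist_eq_norm, Real.norm_eq_abs]
    exact max_le (by linarith [norm_nonneg (x - x')]) (by linarith [abs_nonneg (t - t')])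
  have hKlip : ∀ a b, |deriv W a - deriv W b| ≤ K * |a - b| := fun a b => by
    simpa [Real.dist_eq] using hK.dist_le_mul a b
  have hTk : ∀ (k : ℕ) t x, σ (t + k) x = σ t x := by
    intro k t x
    induction k with
    | zero => simp
    | succ k ih => rw [Nat.cast_succ, ← add_assoc, hσt, ih]
  have hWb : BddAbove (range fun v => |deriv W v|) := by
    refine ⟨|deriv W 0| + K, ?_⟩
    rintro _ ⟨v, rfl⟩
    have h1 := hKlip (Int.fract v) 0
    have h2 : deriv W (Int.fract v) = deriv W v := by
      rw [← hdj ⌊v⌋ (Int.fract v), Int.fract_add_floor]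
    rw [h2, sub_zero, abs_of_nonneg (Int.fract_nonneg v)] at h1
    have h3 : (K:ℝ) * Int.fract v ≤ K * 1 :=
      mul_le_mul_of_nonneg_left (Int.fract_lt_one v).le K.2
    have h4 := abs_sub_abs_le_abs_sub (deriv W v) (deriv W 0)
    simp only
    linarith
  have hσb : BddAbove {r : ℝ | ∃ t x, 0 ≤ t ∧ r = |σ t x|} := by
    refine ⟨|σ 0 0| + Kσ * (1 + √N), ?_⟩
    rintro _ ⟨t, x, ht, rfl⟩
    obtain ⟨k, hk⟩ := exists_latt_norm_le x 0
    rw [sub_zero] at hk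
    have h2 : σ (t - ⌊t⌋₊) (x + latt k) = σ t x := by
      rw [← hTk ⌊t⌋₊, sub_add_cancel]
      exact hσx k t x
    have h1 := hlip (t - ⌊t⌋₊) 0 (x + latt k) 0
    have h0 : 0 ≤ t - ⌊t⌋₊ := by linarith [Nat.floor_le ht]
    rw [h2, sub_zero, sub_zero, abs_of_nonneg h0] at h1
    have h3 : (Kσ:ℝ) * (t - ⌊t⌋₊ + ‖x + latt k‖) ≤ Kσ * (1 + √N) :=
      mul_le_mul_of_nonneg_left (by linarith [Nat.lt_floor_add_one t]) Kσ.2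
    have h4 := abs_sub_abs_le_abs_sub (σ t x) (σ 0 0)
    linarith
  refine ⟨max K 1, Kσ, hN, hs, hg, fun v => le_ciSup hWb v,
    fun t x ht => le_csSup hσb ⟨t, x, ht, rfl⟩, le_max_right _ _, fun a b => ?_, Kσ.2, hlip, hdj,
    hTk, fun k t x => hσx k t x⟩
  exact (hKlip a b).trans (mul_le_mul_of_nonneg_right (le_max_left _ _) (abs_nonneg _))

end Ergodic

/-- **Ergodic properties of the `(N+1)`-dimensional problem (Proposition 3.1).**
Under (H1)–(H4), for `η ≥ 0` the viscosity solution `U_η` of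
`∂_τ U = L + I_s[U(τ,·,y_{N+1})] − W'(U + P·Y) + σ(τ,y)
  + η[a₀ + inf_{Y'} U(τ,Y') − U(τ,Y)]·|∂_{y_{N+1}}U + 1|`, `U(0,·)=0`,
satisfies `|U_η(τ,Y) − λ_η τ| ≤ C` for a unique `λ_η`, with `C` independent of `η`, and
`L − ‖W'‖_∞ − ‖σ‖_∞ + ηa₀ ≤ λ_η ≤ L + ‖W'‖_∞ + ‖σ‖_∞ + ηa₀`. -/
theorem ergodic_properties_Np1
    (N : ℕ) (hN : 1 ≤ N) (s : ℝ) (hs : s ∈ Set.Ioo (0:ℝ) 1)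
    (g : EN N → ℝ) (hg : H1 N g)
    (W : ℝ → ℝ) (hW : H2 W)
    (σ : ℝ → EN N → ℝ) (hσ : H3 N σ)
    (u₀ : EN N → ℝ) (hu₀ : H4 N u₀)
    (a₀ L : ℝ) (p : EN N) :
    ∃ C : ℝ, 0 < C ∧ ∀ η : ℝ, 0 ≤ η →
      ∀ U : ℝ → EN N → ℝ → ℝ,
        IsSolNp1 N s g
          (fun τ y yn v _ dyn I infv =>
            L + I - deriv W (v + ⟪p, y⟫ + yn) + σ τ y
              + η * (a₀ + infv - v) * |dyn + 1|)
          (fun _ _ => 0) U →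
        ∃ lam : ℝ,
          (∀ τ > 0, ∀ (y : EN N) (yn : ℝ), |U τ y yn - lam * τ| ≤ C) ∧
          (∀ lam' : ℝ,
            (∀ τ > 0, ∀ (y : EN N) (yn : ℝ), |U τ y yn - lam' * τ| ≤ C) → lam' = lam) ∧
          L - supW' W - supSigma N σ + η * a₀ ≤ lam ∧
          lam ≤ L + supW' W + supSigma N σ + η * a₀ := by
  obtain ⟨K, Kσ, hD⟩ := exists_cellData hN hs hg hW hσ
  have hsN : 0 ≤ √(N : ℝ) := Real.sqrt_nonneg _
  obtain ⟨κ, hκ0, hκ⟩ := levyKernel_lower hs hg (R := 2 * √N + 4) (by linarith)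
  have hA := hD.A_nonneg
  have hS := hD.S_nonneg
  set Q := 1 + 2 * (supW' W + supSigma N σ) / (κ * volume.real (ball (0 : EN N) 1)) with hQ
  have hQ0 : 0 ≤ Q := by positivity
  refine ⟨2 * Q + 1 + 2 * (supW' W + supSigma N σ), by positivity, fun η hη U hU => ?_⟩
  obtain ⟨hG, hU0⟩ := hU.genSol
  obtain ⟨lam, h1, h2, h3⟩ := hG.ergodic hD hη hU0 (Q := Q)
    (fun t ht y yn z zn => hG.osc hD hη hU0 hκ0 hκ ht y yn z zn)
  refine ⟨lam, fun τ hτ y yn => h3 τ hτ.le y yn, fun lam' h' => ?_, h1, h2⟩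
  -- two admissible slopes differ by at most `2C / τ` for every `τ > 0`
  set C := 2 * Q + 1 + 2 * (supW' W + supSigma N σ) with hC
  have hC0 : 0 < C := by positivity
  by_contra hne
  have hpos : 0 < |lam' - lam| := abs_pos.2 (sub_ne_zero.2 hne)
  set τ := (2 * C + 1) / |lam' - lam| with hτ
  have hτ0 : 0 < τ := by positivity
  have h4 : |lam' - lam| * τ = 2 * C + 1 := by rw [hτ]; field_simp
  have h5 := abs_sub_le (lam' * τ) (U τ 0 0) (lam * τ)
  rw [← sub_mul, abs_mul, abs_of_pos hτ0, h4, abs_sub_comm] at h5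
  linarith [h' τ hτ0 0 0, h3 τ hτ0.le 0 0]
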